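/- Let A be a piecewise-Koszul algebra with period p = 3 and jump degree d, and let M be a piecewise-Koszul A-module generated in degree 0. Then for every integer k ≥ 1, E_k(M) = ⊕_{n≥0} Ext^{3kn}_A(M,A_0), graded with n-th component Ext^{3kn}_A(M,A_0), is a Koszul module over the algebra E_k(A) = ⊕_{n≥0} Ext^{3kn}_A(A_0,A_0): it admits a minimal graded projective resolution over E_k(A) whose n-th term is generated in degree n. -/

import Mathlib

noncomputable section

/-- The jump function `δ^d_p(n) = ((n − (n mod p))/p)·d + (n mod p)`. -/
def jump (d p n : ℕ) : ℕ := (n - n % p) / p * d + n % p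

/-- A positively graded `F`-algebra `A = ⊕_{i≥0} A_i`. -/
structure GradedAlg (F : Type) [Field F] where
  A : Type
  [ringA : Ring A]
  [algA : Algebra F A]
  grading : ℕ → Submodule F A
  [graded : GradedAlgebra grading]

attribute [instance] GradedAlg.ringA GradedAlg.algA GradedAlg.graded

namespace GradedAlg

variable {F : Type} [Field F] (𝒜 : GradedAlg F)

/-- The graded Jacobson radical `J = ⊕_{i≥1} A_i`, i.e. the irrelevant ideal. -/
def jideal : Ideal 𝒜.A := (HomogeneousIdeal.irrelevant 𝒜.grading).toIdeal

/-- The standing assumptions: `A_0` is a semisimple Artin algebra, `A` is generated in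
degrees 0 and 1 (`A_i · A_j = A_{i+j}`), and `A_1` is finite dimensional over `F`. -/
structure Standing : Prop where
  semisimple : IsSemisimpleRing ↥(𝒜.grading 0)
  artinian : IsArtinianRing ↥(𝒜.grading 0)
  gen01 : ∀ i j : ℕ, 𝒜.grading i * 𝒜.grading j = 𝒜.grading (i + j)
  findim : FiniteDimensional F ↥(𝒜.grading 1)

/-- A (ℤ-)graded module over the graded algebra `𝒜`. -/
structure GMod where
  M : Type
  [acg : AddCommGroup M]
  [modF : Module F M]
  [modA : Module 𝒜.A M]
  [tower : IsScalarTower F 𝒜.A M]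
  [scomm : SMulCommClass 𝒜.A F M]
  grading : ℤ → Submodule F M
  sup_eq_top : (⨆ j : ℤ, grading j) = ⊤
  indep : iSupIndep grading
  smul_mem : ∀ {i : ℕ} {j : ℤ} {a : 𝒜.A} {m : M},
    a ∈ 𝒜.grading i → m ∈ grading j → a • m ∈ grading ((i : ℤ) + j)

attribute [instance] GMod.acg GMod.modF GMod.modA GMod.tower GMod.scomm

variable {𝒜}

/-- A degree-zero morphism of graded modules. -/
structure GHom (M N : 𝒜.GMod) where
  lin : M.M →ₗ[𝒜.A] N.M
  grad : ∀ (j : ℤ) (x : M.M), x ∈ M.grading j → lin x ∈ N.grading j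

/-- A graded module is generated in degree `s` if `A · M_s = M`. -/
def GMod.GenInDeg (M : 𝒜.GMod) (s : ℤ) : Prop :=
  Submodule.span 𝒜.A (M.grading s : Set M.M) = ⊤

/-- `T` is the trivial graded module `A_0 = A/J`, concentrated in degree `0`. -/
def IsTrivialGMod (T : 𝒜.GMod) : Prop :=
  (∀ j : ℤ, j ≠ 0 → T.grading j = ⊥) ∧
    Nonempty (T.M ≃ₗ[𝒜.A] (𝒜.A ⧸ 𝒜.jideal))

/-- A minimal graded projective resolution
`⋯ → P_{n+1} → P_n → ⋯ → P_0 → M → 0` of the graded module `M`,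
with finitely generated terms. -/
structure MinRes (M : 𝒜.GMod) where
  P : ℕ → 𝒜.GMod
  d : ∀ n : ℕ, GHom (P (n + 1)) (P n)
  aug : GHom (P 0) M
  fg : ∀ n, Module.Finite 𝒜.A (P n).M
  projective : ∀ n, Module.Projective 𝒜.A (P n).M
  aug_surj : Function.Surjective aug.lin
  exact_aug : LinearMap.range (d 0).lin = LinearMap.ker aug.lin
  exact : ∀ n, LinearMap.range (d (n + 1)).lin = LinearMap.ker (d n).lin
  minimal : ∀ n, LinearMap.range (d n).lin ≤ 𝒜.jideal • (⊤ : Submodule 𝒜.A (P n).M)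

variable (𝒜)

/-- `M` is a piecewise-Koszul module (period `p`, jump degree `d`, shift `s`):
it has a minimal graded projective resolution with `P_n` generated in degree `δ^d_p(n) + s`. -/
def IsPKMod (p d : ℕ) (s : ℤ) (M : 𝒜.GMod) : Prop :=
  ∃ R : MinRes M, ∀ n : ℕ, (R.P n).GenInDeg ((jump d p n : ℤ) + s)

/-- `A` is a piecewise-Koszul algebra (period `p`, jump degree `d`): the trivial module `T`
admits a minimal graded projective resolution with `P_n` generated in degree `δ^d_p(n)`. -/
def IsPKAlg (p d : ℕ) (T : 𝒜.GMod) : Prop := IsPKMod 𝒜 p d 0 T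

/-- A Koszul module: a minimal graded projective resolution with `P_n` generated in degree `n`. -/
def IsKoszulMod (M : 𝒜.GMod) : Prop :=
  ∃ R : MinRes M, ∀ n : ℕ, (R.P n).GenInDeg (n : ℤ)

variable {𝒜}

section Ext

variable (T : 𝒜.GMod) {M : 𝒜.GMod}

/-- The space of `A`-linear maps `P_n → T` (cochains). -/
abbrev HomSp (R : MinRes M) (n : ℕ) := (R.P n).M →ₗ[𝒜.A] T.M

/-- Precomposition, as an `F`-linear map on cochains. -/
def precompF {M₁ M₂ : 𝒜.GMod} (g : M₁.M →ₗ[𝒜.A] M₂.M) :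
    (M₂.M →ₗ[𝒜.A] T.M) →ₗ[F] (M₁.M →ₗ[𝒜.A] T.M) where
  toFun f := f ∘ₗ g
  map_add' f₁ f₂ := by ext x; simp
  map_smul' c f := by ext x; simp

/-- Cocycles: maps `P_n → T` vanishing on the image of `P_{n+1}`. -/
def cocyc (R : MinRes M) (n : ℕ) : Submodule F (HomSp T R n) :=
  LinearMap.ker (precompF T (R.d n).lin)

/-- Coboundaries: maps `P_n → T` factoring through `d_{n-1}`. -/
def cobound (R : MinRes M) : (n : ℕ) → Submodule F (HomSp T R n)
  | 0 => ⊥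
  | n + 1 => LinearMap.range (precompF T (R.d n).lin)

/-- The coboundaries, viewed inside the cocycles. -/
def extRel (R : MinRes M) (n : ℕ) : Submodule F ↥(cocyc T R n) :=
  (cobound T R n).comap (cocyc T R n).subtype

/-- `Ext^n_A(M, T)`, computed from the resolution `R` of `M`. -/
abbrev ExtQ (R : MinRes M) (n : ℕ) := ↥(cocyc T R n) ⧸ extRel T R n

/-- The class in `Ext^n_A(M,T)` of a cocycle. -/
def extCls {R : MinRes M} {n : ℕ} {f : HomSp T R n} (hf : f ∈ cocyc T R n) :
    ExtQ T R n :=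
  Submodule.Quotient.mk ⟨f, hf⟩

/-- Cochains of shift-degree `j`: maps `P_n → T` vanishing on every `(P_n)_i` with `i ≠ j`. -/
def homDeg (R : MinRes M) (n : ℕ) (j : ℤ) : Submodule F (HomSp T R n) where
  carrier := {f | ∀ i : ℤ, i ≠ j → ∀ x ∈ (R.P n).grading i, f x = 0}
  add_mem' := fun hf hg i hi x hx => by
    simp only [LinearMap.add_apply, hf i hi x hx, hg i hi x hx, add_zero]
  zero_mem' := fun i hi x hx => rfl
  smul_mem' := fun c f hf i hi x hx => by
    simp only [LinearMap.smul_apply, hf i hi x hx, smul_zero]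

/-- The shift-degree `j` component `Ext^n_A(M,T)_j`. -/
def extComp (R : MinRes M) (n : ℕ) (j : ℤ) : Submodule F (ExtQ T R n) :=
  Submodule.map (extRel T R n).mkQ ((homDeg T R n j).comap (cocyc T R n).subtype)

/-- Transport `Ext` along an equality of cohomological degrees. -/
def extCast (R : MinRes M) {a b : ℕ} (h : a = b) : ExtQ T R a ≃ₗ[F] ExtQ T R b :=
  h ▸ LinearEquiv.refl F (ExtQ T R a)

/-- A chain map lifting of a cochain `g : P_j → T` over the resolutions `RM` of `M`
and `RT` of `T`. -/
structure ChainLift (RT : MinRes T) (RM : MinRes M) (j : ℕ)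
    (g : (RM.P j).M →ₗ[𝒜.A] T.M) where
  ℓ : ∀ m k : ℕ, m = k + j → ((RM.P m).M →ₗ[𝒜.A] (RT.P k).M)
  comm_aug : RT.aug.lin ∘ₗ ℓ j 0 (by omega) = g
  comm : ∀ k : ℕ, (RT.d k).lin ∘ₗ ℓ (k + j + 1) (k + 1) (by omega) =
    ℓ (k + j) k rfl ∘ₗ (RM.d (k + j)).lin

/-- `μ` is the (bigraded family of) Yoneda product(s)
`Ext^i(T,T) ⊗ Ext^j(M,T) → Ext^{i+j}(M,T)`: it is computed by composing a cocycle
`f : P_i → T` with a chain lifting of a cocycle `g : Q_j → T`. -/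
def IsYonedaMul (RT : MinRes T) (RM : MinRes M)
    (μ : ∀ i j : ℕ, ExtQ T RT i →ₗ[F] ExtQ T RM j →ₗ[F] ExtQ T RM (i + j)) : Prop :=
  ∀ (i j : ℕ) (f : HomSp T RT i) (hf : f ∈ cocyc T RT i)
    (g : HomSp T RM j) (hg : g ∈ cocyc T RM j)
    (L : ChainLift T RT RM j g)
    (hc : f ∘ₗ L.ℓ (i + j) i (by omega) ∈ cocyc T RM (i + j)),
    μ i j (extCls T hf) (extCls T hg) = extCls T hc

/-- `E(A) = Ext^*_A(A_0,A_0)` is generated in the ext-degrees belonging to `S`. -/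
def ExtGenIn (RT : MinRes T)
    (μ : ∀ i j : ℕ, ExtQ T RT i →ₗ[F] ExtQ T RT j →ₗ[F] ExtQ T RT (i + j))
    (S : Set ℕ) : Prop :=
  ∀ W : (n : ℕ) → Submodule F (ExtQ T RT n),
    (∀ n ∈ S, W n = ⊤) →
    (∀ (i j : ℕ) (x : ExtQ T RT i) (y : ExtQ T RT j),
      x ∈ W i → y ∈ W j → μ i j x y ∈ W (i + j)) →
    ∀ n, W n = ⊤

/-- `E(M) = Ext^*_A(M,A_0)` is generated in degree `0` as a graded `E(A)`-module. -/
def ExtModGenInZero (RT : MinRes T) (RM : MinRes M)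
    (μ : ∀ i j : ℕ, ExtQ T RT i →ₗ[F] ExtQ T RM j →ₗ[F] ExtQ T RM (i + j)) : Prop :=
  ∀ W : (n : ℕ) → Submodule F (ExtQ T RM n),
    W 0 = ⊤ →
    (∀ (i j : ℕ) (x : ExtQ T RT i) (y : ExtQ T RM j),
      y ∈ W j → μ i j x y ∈ W (i + j)) →
    ∀ n, W n = ⊤

end Ext

/-- `JM` is (a graded module isomorphic to) the submodule `J·M` of `M`. -/
def IsJM (M JM : 𝒜.GMod) : Prop :=
  ∃ e : JM.M ≃ₗ[𝒜.A] ↥(𝒜.jideal • (⊤ : Submodule 𝒜.A M.M)),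
    ∀ (j : ℤ) (x : JM.M), x ∈ JM.grading j ↔ ((e x : M.M) ∈ M.grading j)

/-- `Q` is (a graded module isomorphic to) the quotient `M/JM`. -/
def IsQuotJM (M Q : 𝒜.GMod) : Prop :=
  ∃ e : Q.M ≃ₗ[𝒜.A] (M.M ⧸ (𝒜.jideal • (⊤ : Submodule 𝒜.A M.M))),
    ∀ j : ℤ, Q.grading j = Submodule.map
      ((e.symm.toLinearMap ∘ₗ (𝒜.jideal • (⊤ : Submodule 𝒜.A M.M)).mkQ).restrictScalars F)
      (M.grading j)

/-- `W` is (isomorphic to) the `n`-th syzygy `Ω^n(M)` of `M` in the minimal graded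
projective resolution `R`. -/
def IsSyzygy {M : 𝒜.GMod} (R : MinRes M) : ℕ → 𝒜.GMod → Prop
  | 0, W => ∃ e : W.M ≃ₗ[𝒜.A] M.M,
      ∀ (j : ℤ) (x : W.M), x ∈ W.grading j ↔ e x ∈ M.grading j
  | 1, W => ∃ e : W.M ≃ₗ[𝒜.A] ↥(LinearMap.ker R.aug.lin),
      ∀ (j : ℤ) (x : W.M), x ∈ W.grading j ↔ ((e x : (R.P 0).M) ∈ (R.P 0).grading j)
  | (n + 2), W => ∃ e : W.M ≃ₗ[𝒜.A] ↥(LinearMap.ker (R.d n).lin),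
      ∀ (j : ℤ) (x : W.M), x ∈ W.grading j ↔ ((e x : (R.P (n + 1)).M) ∈ (R.P (n + 1)).grading j)

end GradedAlg

namespace GradedAlg

/-! ### Part 1: graded modules -/

theorem iSupIndep_of_detect {F : Type} [Field F] {X Y : Type} [AddCommGroup X] [Module F X]
    [AddCommGroup Y] [Module F Y] {ι : Type} (g : ι → Submodule F X) (p : ι → X →ₗ[F] Y)
    (h1 : ∀ i j, i ≠ j → ∀ x ∈ g i, p j x = 0) (h2 : ∀ j, ∀ x ∈ g j, p j x = 0 → x = 0) :
    iSupIndep g := by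
  intro i
  rw [Submodule.disjoint_def]
  intro x hx hx'
  apply h2 i x hx
  have : (⨆ (j : ι) (_ : j ≠ i), g j) ≤ LinearMap.ker (p i) := by
    refine iSup_le fun j => iSup_le fun hj y hy => ?_
    exact h1 j i hj y hy
  exact this hx'

variable {F : Type} [Field F] {𝒜 : GradedAlg F}

namespace GMod

variable (X : 𝒜.GMod)

theorem isInternal : DirectSum.IsInternal X.grading :=
  DirectSum.isInternal_submodule_of_iSupIndep_of_iSup_eq_top X.indep X.sup_eq_top

instance decomp : DirectSum.Decomposition X.grading :=
  DirectSum.IsInternal.chooseDecomposition _ X.isInternal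

/-- The projection on the degree `j` component. -/
def pr (j : ℤ) : X.M →ₗ[F] X.M where
  toFun x := (DirectSum.decompose X.grading x j : X.M)
  map_add' x y := by simp
  map_smul' c x := by rw [DirectSum.decompose_smul]; rfl

theorem pr_mem (j : ℤ) (x : X.M) : X.pr j x ∈ X.grading j := (DirectSum.decompose X.grading x j).2

theorem pr_of_mem {j : ℤ} {x : X.M} (h : x ∈ X.grading j) : X.pr j x = x :=
  DirectSum.decompose_of_mem_same X.grading h

theorem pr_of_mem_ne {i j : ℤ} {x : X.M} (h : x ∈ X.grading i) (hij : i ≠ j) : X.pr j x = 0 :=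
  DirectSum.decompose_of_mem_ne X.grading h hij

theorem exists_sum_pr (x : X.M) : ∃ s : Finset ℤ, ∑ j ∈ s, X.pr j x = x := by
  classical
  exact ⟨_, DirectSum.sum_support_decompose X.grading x⟩

theorem eq_zero_of_pr {x : X.M} (h : ∀ j, X.pr j x = 0) : x = 0 := by
  obtain ⟨s, hs⟩ := X.exists_sum_pr x
  rw [← hs]; exact Finset.sum_eq_zero fun j _ => h j

theorem ext_pr {x y : X.M} (h : ∀ j, X.pr j x = X.pr j y) : x = y := by
  rw [← sub_eq_zero]
  exact X.eq_zero_of_pr fun j => by simp [h]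

@[elab_as_elim]
theorem hom_induction {p : X.M → Prop} (x : X.M) (h0 : p 0)
    (hh : ∀ j, ∀ x ∈ X.grading j, p x) (ha : ∀ x y, p x → p y → p (x + y)) : p x := by
  obtain ⟨s, hs⟩ := X.exists_sum_pr x
  rw [← hs]
  exact Finset.sum_induction _ p ha h0 fun j _ => hh j _ (X.pr_mem j x)

theorem pr_smul {i : ℕ} {a : 𝒜.A} (ha : a ∈ 𝒜.grading i) (j : ℤ) (x : X.M) :
    X.pr j (a • x) = a • X.pr (j - i) x := by
  refine X.hom_induction x (by simp) ?_ ?_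
  · intro l x hx
    by_cases h : (i : ℤ) + l = j
    · have h2 : j - i = l := by omega
      rw [h2, X.pr_of_mem hx]
      exact X.pr_of_mem (h ▸ X.smul_mem ha hx)
    · rw [X.pr_of_mem_ne hx (by omega), X.pr_of_mem_ne (X.smul_mem ha hx) h, smul_zero]
  · intro x y hx hy
    simp only [smul_add, map_add, hx, hy]

end GMod

/-- homogeneous induction for the algebra -/
@[elab_as_elim]
theorem alg_induction {p : 𝒜.A → Prop} (a : 𝒜.A) (h0 : p 0)
    (hh : ∀ i, ∀ a ∈ 𝒜.grading i, p a) (ha : ∀ x y, p x → p y → p (x + y)) : p a := by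
  classical
  rw [← DirectSum.sum_support_decompose 𝒜.grading a]
  exact Finset.sum_induction _ p ha h0 fun j _ => hh j _ (DirectSum.decompose 𝒜.grading a j).2

/-- the degree zero part of an element of the algebra -/
def z0 (a : 𝒜.A) : 𝒜.A := GradedRing.proj 𝒜.grading 0 a

theorem z0_mem (a : 𝒜.A) : z0 a ∈ 𝒜.grading 0 := (DirectSum.decompose 𝒜.grading a 0).2

theorem mem_jideal {a : 𝒜.A} : a ∈ 𝒜.jideal ↔ z0 a = 0 :=
  HomogeneousIdeal.mem_irrelevant_iff 𝒜.grading a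

theorem z0_of_mem {a : 𝒜.A} (h : a ∈ 𝒜.grading 0) : z0 a = a :=
  DirectSum.decompose_of_mem_same 𝒜.grading h

theorem z0_of_mem_ne {i : ℕ} (hi : i ≠ 0) {a : 𝒜.A} (h : a ∈ 𝒜.grading i) : z0 a = 0 :=
  DirectSum.decompose_of_mem_ne 𝒜.grading h hi

theorem z0_add (a b : 𝒜.A) : z0 (a + b) = z0 a + z0 b := map_add _ a b

theorem z0_zero : z0 (0 : 𝒜.A) = 0 := map_zero (GradedRing.proj 𝒜.grading 0)

theorem z0_mul (a b : 𝒜.A) : z0 (a * b) = z0 a * z0 b :=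
  map_mul (GradedRing.projZeroRingHom 𝒜.grading) a b

theorem sub_z0_mem (a : 𝒜.A) : a - z0 a ∈ 𝒜.jideal := by
  rw [mem_jideal]
  have : z0 (a - z0 a) = z0 a - z0 (z0 a) := map_sub (GradedRing.proj 𝒜.grading 0) _ _
  rw [this, z0_of_mem (z0_mem a), sub_self]

theorem jideal_mul_mem {a : 𝒜.A} (h : a ∈ 𝒜.jideal) (b : 𝒜.A) : a * b ∈ 𝒜.jideal := by
  rw [mem_jideal] at *
  rw [z0_mul, h, zero_mul]

/-- `J·X` -/
abbrev JX (X : Type) [AddCommGroup X] [Module 𝒜.A X] : Submodule 𝒜.A X :=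
  𝒜.jideal • (⊤ : Submodule 𝒜.A X)

theorem map_JX {X Y : Type} [AddCommGroup X] [Module 𝒜.A X] [AddCommGroup Y] [Module 𝒜.A Y]
    (f : X →ₗ[𝒜.A] Y) {x : X} (hx : x ∈ 𝒜.jideal • (⊤ : Submodule 𝒜.A X)) :
    f x ∈ 𝒜.jideal • (⊤ : Submodule 𝒜.A Y) := by
  refine Submodule.smul_induction_on hx ?_ ?_
  · intro a ha y _
    rw [map_smul]
    exact Submodule.smul_mem_smul ha trivial
  · intro x y hx hy
    rw [map_add]; exact add_mem hx hy

theorem map_JX_zero {X Y : Type} [AddCommGroup X] [Module 𝒜.A X] [AddCommGroup Y] [Module 𝒜.A Y]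
    (hY : ∀ a ∈ 𝒜.jideal, ∀ y : Y, a • y = 0)
    (f : X →ₗ[𝒜.A] Y) {x : X} (hx : x ∈ 𝒜.jideal • (⊤ : Submodule 𝒜.A X)) : f x = 0 := by
  refine Submodule.smul_induction_on hx ?_ ?_
  · intro a ha y _
    rw [map_smul, hY a ha]
  · intro x y hx hy
    rw [map_add, hx, hy, add_zero]

theorem kill_quot {X : Type} [AddCommGroup X] [Module 𝒜.A X] :
    ∀ a ∈ 𝒜.jideal, ∀ y : X ⧸ (𝒜.jideal • (⊤ : Submodule 𝒜.A X)), a • y = 0 := by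
  intro a ha y
  obtain ⟨x, rfl⟩ := Submodule.Quotient.mk_surjective _ y
  rw [← Submodule.Quotient.mk_smul, Submodule.Quotient.mk_eq_zero]
  exact Submodule.smul_mem_smul ha trivial

/-- Modules killed by `J` are semisimple. -/
theorem semisimple_of_kill (hs : IsSemisimpleRing ↥(𝒜.grading 0)) (V : Type) [AddCommGroup V]
    [Module 𝒜.A V] (hV : ∀ a ∈ 𝒜.jideal, ∀ v : V, a • v = 0) : IsSemisimpleModule 𝒜.A V := by
  let ι : ↥(𝒜.grading 0) →+* 𝒜.A :=
    { toFun := fun x => (x : 𝒜.A)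
      map_one' := rfl
      map_zero' := rfl
      map_mul' := fun _ _ => rfl
      map_add' := fun _ _ => rfl }
  let _ : Module ↥(𝒜.grading 0) V := Module.compHom V ι
  have hsm : ∀ (a : 𝒜.A) (v : V), a • v = (⟨z0 a, z0_mem a⟩ : ↥(𝒜.grading 0)) • v := by
    intro a v
    change a • v = z0 a • v
    rw [← sub_eq_zero, ← sub_smul]
    exact hV _ (sub_z0_mem a) v
  have : IsSemisimpleModule ↥(𝒜.grading 0) V := inferInstance
  let toZ : Submodule 𝒜.A V → Submodule ↥(𝒜.grading 0) V := fun U =>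
    { carrier := U
      add_mem' := fun h h' => U.add_mem h h'
      zero_mem' := U.zero_mem
      smul_mem' := fun c x hx => U.smul_mem (ι c) hx }
  let ofZ : Submodule ↥(𝒜.grading 0) V → Submodule 𝒜.A V := fun U =>
    { carrier := U
      add_mem' := fun h h' => U.add_mem h h'
      zero_mem' := U.zero_mem
      smul_mem' := fun c x hx => by rw [hsm]; exact U.smul_mem _ hx }
  rw [isSemisimpleModule_iff]
  refine ⟨fun U => ?_⟩
  obtain ⟨U', hU'⟩ := exists_isCompl (toZ U)
  refine ⟨ofZ U', ?_⟩
  rw [isCompl_iff] at *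
  constructor
  · rw [Submodule.disjoint_def]
    intro x hx hx'
    exact (Submodule.disjoint_def.1 hU'.1) x hx hx'
  · rw [codisjoint_iff, eq_top_iff]
    intro x _
    have hx : x ∈ toZ U ⊔ U' := by rw [codisjoint_iff.1 hU'.2]; trivial
    obtain ⟨y, hy, z, hz, rfl⟩ := Submodule.mem_sup.1 hx
    exact Submodule.add_mem_sup (show y ∈ U from hy) (show z ∈ ofZ U' from hz)

namespace GMod
variable {X : 𝒜.GMod}

theorem GenInDeg.pr_eq_zero {s : ℤ} (h : X.GenInDeg s) {j : ℤ} (hj : j < s) (x : X.M) :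
    X.pr j x = 0 := by
  have hx : x ∈ Submodule.span 𝒜.A (X.grading s : Set X.M) := by rw [h]; trivial
  revert j
  induction hx using Submodule.span_induction with
  | mem x hx => intro j hj; exact X.pr_of_mem_ne hx (by omega)
  | zero => intros; simp
  | add x y _ _ hx hy => intro j hj; rw [map_add, hx hj, hy hj, add_zero]
  | smul a x _ hx =>
    intro j hj
    refine alg_induction a (by simp) ?_ ?_
    · intro i a ha
      rw [X.pr_smul ha, hx (by omega), smul_zero]
    · intro a b ha hb
      rw [add_smul, map_add, ha, hb, add_zero]

theorem GenInDeg.pr_smul_bot {s : ℤ} (h : X.GenInDeg s) (a : 𝒜.A) (x : X.M) :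
    X.pr s (a • x) = z0 a • X.pr s x := by
  refine alg_induction a (by simp [z0_zero]) ?_ ?_
  · intro i a ha
    rw [X.pr_smul ha]
    rcases Nat.eq_zero_or_pos i with rfl | hi
    · rw [z0_of_mem ha]; simp
    · rw [z0_of_mem_ne (by omega) ha, h.pr_eq_zero (by omega), smul_zero, zero_smul]
  · intro a b ha hb
    rw [add_smul, map_add, ha, hb, z0_add, add_smul]

theorem GenInDeg.sub_pr_mem {s : ℤ} (h : X.GenInDeg s) (x : X.M) :
    x - X.pr s x ∈ 𝒜.jideal • (⊤ : Submodule 𝒜.A X.M) := by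
  have hx : x ∈ Submodule.span 𝒜.A (X.grading s : Set X.M) := by rw [h]; trivial
  induction hx using Submodule.span_induction with
  | mem x hx => rw [X.pr_of_mem hx, sub_self]; exact zero_mem _
  | zero => simp
  | add x y _ _ hx hy => rw [map_add, add_sub_add_comm]; exact add_mem hx hy
  | smul a x _ hx =>
    rw [h.pr_smul_bot]
    have : a • x - z0 a • X.pr s x = a • (x - X.pr s x) + (a - z0 a) • X.pr s x := by
      rw [smul_sub, sub_smul]; abel
    rw [this]
    exact add_mem (Submodule.smul_mem _ _ hx) (Submodule.smul_mem_smul (sub_z0_mem a) trivial)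

theorem GenInDeg.mem_JX {s : ℤ} (h : X.GenInDeg s) (x : X.M) :
    x ∈ 𝒜.jideal • (⊤ : Submodule 𝒜.A X.M) ↔ X.pr s x = 0 := by
  constructor
  · intro hx
    refine Submodule.smul_induction_on hx ?_ ?_
    · intro a ha y _
      rw [h.pr_smul_bot, mem_jideal.1 ha, zero_smul]
    · intro x y hx hy
      rw [map_add, hx, hy, add_zero]
  · intro hx
    have := h.sub_pr_mem x
    rwa [hx, sub_zero] at this

end GMod

namespace GHom
variable {X Y Z : 𝒜.GMod}

theorem pr_apply (f : GHom X Y) (j : ℤ) (x : X.M) : Y.pr j (f.lin x) = f.lin (X.pr j x) := by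
  refine X.hom_induction x (by simp) ?_ ?_
  · intro l x hx
    by_cases h : l = j
    · subst h
      rw [X.pr_of_mem hx, Y.pr_of_mem (f.grad _ _ hx)]
    · rw [X.pr_of_mem_ne hx h, Y.pr_of_mem_ne (f.grad _ _ hx) h, map_zero]
  · intro x y hx hy
    simp only [map_add, hx, hy]

/-- composition -/
def comp (g : GHom Y Z) (f : GHom X Y) : GHom X Z where
  lin := g.lin ∘ₗ f.lin
  grad j x hx := g.grad j _ (f.grad j x hx)

def idH (X : 𝒜.GMod) : GHom X X := ⟨LinearMap.id, fun _ _ h => h⟩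

theorem sub_grad (f g : GHom X Y) : ∀ (j : ℤ) (x : X.M), x ∈ X.grading j →
    f.lin x - g.lin x ∈ Y.grading j := fun j x hx =>
  sub_mem (f.grad j x hx) (g.grad j x hx)

/-- Degree zero part of a linear map. -/
theorem exists_degZero (h : X.M →ₗ[𝒜.A] Y.M) :
    ∃ h0 : GHom X Y, ∀ (j : ℤ) (x : X.M), x ∈ X.grading j → h0.lin x = Y.pr j (h x) := by
  classical
  let g : X.M →ₗ[F] Y.M := (DirectSum.toModule F ℤ Y.M
    (fun j => (Y.pr j ∘ₗ h.restrictScalars F) ∘ₗ (X.grading j).subtype)) ∘ₗ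
      (DirectSum.decomposeLinearEquiv X.grading).toLinearMap
  have hg : ∀ (j : ℤ) (x : X.M), x ∈ X.grading j → g x = Y.pr j (h x) := by
    intro j x hx
    have : DirectSum.decomposeLinearEquiv X.grading x =
        DirectSum.lof F ℤ (fun j => X.grading j) j ⟨x, hx⟩ := by
      exact DirectSum.decompose_of_mem X.grading hx
    change DirectSum.toModule F ℤ Y.M _ (DirectSum.decomposeLinearEquiv X.grading x) = _
    rw [this, DirectSum.toModule_lof]
    rfl
  refine ⟨⟨{ toFun := g, map_add' := g.map_add, map_smul' := ?_ }, ?_⟩, hg⟩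
  · intro a x
    simp only [RingHom.id_apply]
    refine alg_induction a (by simp) ?_ ?_
    · intro i a ha
      refine X.hom_induction x (by simp) ?_ ?_
      · intro j x hx
        rw [hg _ _ (X.smul_mem ha hx), hg _ _ hx, map_smul, Y.pr_smul ha,
          add_sub_cancel_left]
      · intro x y hx hy
        rw [smul_add, map_add, map_add, smul_add, hx, hy]
    · intro a b ha hb
      rw [add_smul, map_add, ha, hb, add_smul]
  · intro j x hx
    change g x ∈ _
    rw [hg j x hx]
    exact Y.pr_mem j _

/-- Graded lifting. -/
theorem exists_lift (hP : Module.Projective 𝒜.A X.M) (f : GHom X Z) (g : GHom Y Z)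
    (h : ∀ x, f.lin x ∈ LinearMap.range g.lin) :
    ∃ l : GHom X Y, g.lin ∘ₗ l.lin = f.lin := by
  obtain ⟨l, hl⟩ := Module.projective_lifting_property g.lin.rangeRestrict
    (f.lin.codRestrict _ h) g.lin.surjective_rangeRestrict
  obtain ⟨l0, hl0⟩ := exists_degZero l
  refine ⟨l0, ?_⟩
  have hgl : ∀ x, g.lin (l x) = f.lin x := fun x => congrArg Subtype.val (LinearMap.congr_fun hl x)
  ext x
  refine X.hom_induction x (by simp) ?_ ?_
  · intro j x hx
    rw [LinearMap.comp_apply, hl0 j x hx, ← g.pr_apply, hgl, Z.pr_of_mem (f.grad j x hx)]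
  · intro x y hx hy
    rw [map_add, map_add, hx, hy]

theorem ext_gen {s : ℤ} (hX : X.GenInDeg s) {f g : X.M →ₗ[𝒜.A] Y.M}
    (h : ∀ x ∈ X.grading s, f x = g x) : f = g :=
  LinearMap.ext_on hX h

/-- A graded map whose image lies in `J Y`, where `X`, `Y` are generated in the same degree,
vanishes. -/
theorem eq_of_sub_mem {s : ℤ} (hX : X.GenInDeg s) (hY : Y.GenInDeg s) (f g : GHom X Y)
    (h : ∀ x ∈ X.grading s, f.lin x - g.lin x ∈ 𝒜.jideal • (⊤ : Submodule 𝒜.A Y.M)) :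
    f.lin = g.lin := by
  refine ext_gen hX fun x hx => ?_
  have h1 := (hY.mem_JX _).1 (h x hx)
  rw [Y.pr_of_mem (sub_grad f g s x hx)] at h1
  exact sub_eq_zero.1 h1

theorem range_le_JX {s t : ℤ} (hX : X.GenInDeg t) (hY : Y.GenInDeg s) (hst : s < t)
    (f : GHom X Y) : LinearMap.range f.lin ≤ 𝒜.jideal • (⊤ : Submodule 𝒜.A Y.M) := by
  rintro _ ⟨x, rfl⟩
  rw [hY.mem_JX, f.pr_apply, hX.pr_eq_zero hst, map_zero]

/-- Splitting. -/
theorem exists_retraction (hs : IsSemisimpleRing ↥(𝒜.grading 0)) {s : ℤ} (hX : X.GenInDeg s)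
    (hY : Y.GenInDeg s) (hP : Module.Projective 𝒜.A Y.M) (f : GHom X Y)
    (hf : ∀ x ∈ X.grading s, f.lin x = 0 → x = 0) :
    ∃ r : GHom Y X, r.lin ∘ₗ f.lin = LinearMap.id := by
  let JX := 𝒜.jideal • (⊤ : Submodule 𝒜.A X.M)
  let JY := 𝒜.jideal • (⊤ : Submodule 𝒜.A Y.M)
  have hle : JX ≤ JY.comap f.lin := fun x hx => map_JX f.lin hx
  let fb : X.M ⧸ JX →ₗ[𝒜.A] Y.M ⧸ JY := JX.mapQ JY f.lin hle
  have hinj : Function.Injective fb := by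
    rw [injective_iff_map_eq_zero]
    intro x hx
    obtain ⟨x, rfl⟩ := Submodule.Quotient.mk_surjective _ x
    have h1 : f.lin x ∈ JY := (Submodule.Quotient.mk_eq_zero _).1 hx
    have h2 := (hY.mem_JX _).1 h1
    rw [f.pr_apply] at h2
    exact (Submodule.Quotient.mk_eq_zero _).2 ((hX.mem_JX _).2 (hf _ (X.pr_mem _ _) h2))
  have := semisimple_of_kill hs (Y.M ⧸ JY) kill_quot
  obtain ⟨ρ, hρ⟩ := IsSemisimpleModule.extension_property fb hinj LinearMap.id
  obtain ⟨r', hr'⟩ := Module.projective_lifting_property JX.mkQ (ρ ∘ₗ JY.mkQ) JX.mkQ_surjective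
  obtain ⟨r, hr⟩ := exists_degZero r'
  refine ⟨r, ?_⟩
  refine ext_gen hX fun x hx => ?_
  rw [LinearMap.comp_apply, hr s _ (f.grad s x hx), LinearMap.id_apply]
  have h1 : JX.mkQ (r' (f.lin x)) = JX.mkQ x := by
    have := LinearMap.congr_fun hr' (f.lin x)
    simp only [LinearMap.comp_apply] at this
    rw [this]
    exact LinearMap.congr_fun hρ (JX.mkQ x)
  have h2 : r' (f.lin x) - x ∈ JX := by
    rw [← Submodule.Quotient.mk_eq_zero, Submodule.Quotient.mk_sub]
    exact sub_eq_zero.2 h1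
  have h3 := (hX.mem_JX _).1 h2
  rw [map_sub, X.pr_of_mem hx] at h3
  exact sub_eq_zero.1 h3

end GHom

end GradedAlg

namespace GradedAlg

/-! ### Part 2: complexes and shift chain maps -/

variable {F : Type} [Field F] {𝒜 : GradedAlg F}

/-- A minimal complex of projectives (no augmentation). -/
structure PCx (𝒜 : GradedAlg F) where
  P : ℕ → 𝒜.GMod
  d : ∀ n : ℕ, (P (n + 1)).M →ₗ[𝒜.A] (P n).M
  projective : ∀ n, Module.Projective 𝒜.A (P n).M
  exact : ∀ n, LinearMap.range (d (n + 1)) = LinearMap.ker (d n)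
  minimal : ∀ n, LinearMap.range (d n) ≤ 𝒜.jideal • (⊤ : Submodule 𝒜.A (P n).M)

/-- forget the augmentation -/
@[reducible] def MinRes.cx {M : 𝒜.GMod} (R : MinRes M) : PCx 𝒜 where
  P := R.P
  d n := (R.d n).lin
  projective := R.projective
  exact := R.exact
  minimal := R.minimal

/-- shift chain maps `C_{n+j} → D_n` -/
structure SMap (C D : PCx 𝒜) (j : ℕ) where
  f : ∀ m n : ℕ, m = n + j → ((C.P m).M →ₗ[𝒜.A] (D.P n).M)
  comm : ∀ (m n : ℕ) (h : m = n + j) (h' : m + 1 = n + 1 + j),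
    D.d n ∘ₗ f (m + 1) (n + 1) h' = f m n h ∘ₗ C.d m

namespace PCx
variable (C D : PCx 𝒜)

theorem d_d (n : ℕ) (x : (C.P (n + 2)).M) : C.d n (C.d (n + 1) x) = 0 := by
  have : C.d (n + 1) x ∈ LinearMap.range (C.d (n + 1)) := ⟨x, rfl⟩
  rw [C.exact] at this
  exact this

theorem hom_d {V : Type} [AddCommGroup V] [Module 𝒜.A V]
    (hV : ∀ a ∈ 𝒜.jideal, ∀ v : V, a • v = 0) {n : ℕ} (f : (C.P n).M →ₗ[𝒜.A] V) :
    f ∘ₗ C.d n = 0 := by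
  ext x
  exact map_JX_zero hV f (C.minimal n ⟨x, rfl⟩)

/-- transport -/
def cast {m n : ℕ} (h : m = n) : (C.P m).M →ₗ[𝒜.A] (C.P n).M := h ▸ LinearMap.id

@[simp] theorem cast_rfl {m : ℕ} (h : m = m) : C.cast h = LinearMap.id := rfl

end PCx

namespace SMap
variable {C D E : PCx 𝒜}

/-- An ordinary chain map as shift map -/
def ofChain (a : ∀ n, (C.P n).M →ₗ[𝒜.A] (D.P n).M)
    (ha : ∀ n, D.d n ∘ₗ a (n + 1) = a n ∘ₗ C.d n) : SMap C D 0 where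
  f m n h := a n ∘ₗ C.cast (by omega)
  comm m n h h' := by
    obtain rfl : m = n := by omega
    simpa using ha m

def idS (C : PCx 𝒜) : SMap C C 0 := ofChain (fun _ => LinearMap.id) (fun _ => rfl)

def comp {i j : ℕ} (b : SMap D E i) (a : SMap C D j) : SMap C E (i + j) where
  f m n h := b.f (n + i) n rfl ∘ₗ a.f m (n + i) (by omega)
  comm m n h h' := by
    subst h
    have h1 := b.comm (n + i) n rfl (by omega)
    have h2 := a.comm (n + (i + j)) (n + i) (by omega) (by omega)
    have key : ∀ (l : ℕ) (hl : l = n + i + 1) (hh : n + (i + j) + 1 = l + j) (hh' : l = n + 1 + i),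
      b.f l (n + 1) hh' ∘ₗ a.f (n + (i + j) + 1) l hh =
      b.f (n + i + 1) (n + 1) (by omega) ∘ₗ a.f (n + (i + j) + 1) (n + i + 1) (by omega) := by
      intro l hl _ _
      subst hl
      rfl
    rw [key _ (by omega) _ _]
    ext x
    have e1 := LinearMap.congr_fun h1 (a.f (n + (i + j) + 1) (n + i + 1) (by omega) x)
    have e2 := LinearMap.congr_fun h2 x
    simp only [LinearMap.comp_apply] at e1 e2 ⊢
    rw [e1, e2]

variable {V : Type} [AddCommGroup V] [Module 𝒜.A V]

/-- existence of lifts -/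
theorem exists_lift (ε : (D.P 0).M →ₗ[𝒜.A] V) (hε : LinearMap.range (D.d 0) = LinearMap.ker ε)
    (hsurj : Function.Surjective ε) (j : ℕ) (g : (C.P j).M →ₗ[𝒜.A] V) (hg : g ∘ₗ C.d j = 0) :
    ∃ L : SMap C D j, ε ∘ₗ L.f j 0 (by omega) = g := by
  have lift : ∀ {X Y Z : Type} [AddCommGroup X] [AddCommGroup Y] [AddCommGroup Z]
      [Module 𝒜.A X] [Module 𝒜.A Y] [Module 𝒜.A Z] (_ : Module.Projective 𝒜.A X)
      (u : X →ₗ[𝒜.A] Z) (v : Y →ₗ[𝒜.A] Z), LinearMap.range u ≤ LinearMap.range v →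
      ∃ w : X →ₗ[𝒜.A] Y, v ∘ₗ w = u := by
    intro X Y Z _ _ _ _ _ _ _ u v h
    obtain ⟨l, hl⟩ := Module.projective_lifting_property v.rangeRestrict
      (u.codRestrict _ (fun x => h ⟨x, rfl⟩)) v.surjective_rangeRestrict
    exact ⟨l, LinearMap.ext fun x => congrArg Subtype.val (LinearMap.congr_fun hl x)⟩
  obtain ⟨l0, hl0⟩ := lift (C.projective j) g ε (by rw [LinearMap.range_eq_top.2 hsurj]; exact le_top)
  have h1 : ∃ l1 : (C.P (j + 1)).M →ₗ[𝒜.A] (D.P 1).M, D.d 0 ∘ₗ l1 = l0 ∘ₗ C.d j := by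
    refine lift (C.projective _) _ _ ?_
    rintro _ ⟨x, rfl⟩
    rw [hε, LinearMap.mem_ker, ← LinearMap.comp_apply, ← LinearMap.comp_assoc, hl0, hg]
    rfl
  obtain ⟨l1, hl1⟩ := h1
  let St (n : ℕ) := {p : ((C.P (j + n)).M →ₗ[𝒜.A] (D.P n).M) ×
    ((C.P (j + n + 1)).M →ₗ[𝒜.A] (D.P (n + 1)).M) // D.d n ∘ₗ p.2 = p.1 ∘ₗ C.d (j + n)}
  have step : ∀ n (p : St n), ∃ q : St (n + 1), q.1.1 = p.1.2 := by
    rintro n ⟨⟨u, v⟩, h⟩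
    obtain ⟨w, hw⟩ := lift (C.projective (j + n + 2)) (v ∘ₗ C.d (j + n + 1)) (D.d (n + 1)) (by
      rintro _ ⟨x, rfl⟩
      rw [D.exact, LinearMap.mem_ker, ← LinearMap.comp_apply, ← LinearMap.comp_assoc, h]
      simp only [LinearMap.comp_apply, C.d_d, map_zero])
    exact ⟨⟨⟨v, w⟩, hw⟩, rfl⟩
  choose nx hnx using step
  let sq : ∀ n, St n := fun n => Nat.rec ⟨⟨l0, l1⟩, hl1⟩ (fun n p => nx n p) n
  have hs : ∀ n, (sq (n + 1)).1.1 = (sq n).1.2 := fun n => hnx n (sq n)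
  refine ⟨⟨fun m n h => (sq n).1.1 ∘ₗ C.cast (by omega), ?_⟩, ?_⟩
  · intro m n h h'
    obtain rfl : m = j + n := by omega
    have := (sq n).2
    rw [← hs] at this
    exact this
  · exact hl0

/-- uniqueness of lifts, up to homotopy -/
theorem lift_unique {T : Type} [AddCommGroup T] [Module 𝒜.A T]
    (hT : ∀ a ∈ 𝒜.jideal, ∀ v : T, a • v = 0)
    (ε : (D.P 0).M →ₗ[𝒜.A] V) (hε : LinearMap.range (D.d 0) = LinearMap.ker ε)
    {j : ℕ} (L L' : SMap C D j)
    (h0 : ε ∘ₗ L.f j 0 (by omega) = ε ∘ₗ L'.f j 0 (by omega))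
    (m n : ℕ) (h : m = n + j) (f : (D.P n).M →ₗ[𝒜.A] T) : f ∘ₗ L.f m n h = f ∘ₗ L'.f m n h := by
  have lift : ∀ {X Y Z : Type} [AddCommGroup X] [AddCommGroup Y] [AddCommGroup Z]
      [Module 𝒜.A X] [Module 𝒜.A Y] [Module 𝒜.A Z] (_ : Module.Projective 𝒜.A X)
      (u : X →ₗ[𝒜.A] Z) (v : Y →ₗ[𝒜.A] Z), LinearMap.range u ≤ LinearMap.range v →
      ∃ w : X →ₗ[𝒜.A] Y, v ∘ₗ w = u := by
    intro X Y Z _ _ _ _ _ _ _ u v h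
    obtain ⟨l, hl⟩ := Module.projective_lifting_property v.rangeRestrict
      (u.codRestrict _ (fun x => h ⟨x, rfl⟩)) v.surjective_rangeRestrict
    exact ⟨l, LinearMap.ext fun x => congrArg Subtype.val (LinearMap.congr_fun hl x)⟩
  have key : ∀ (n m : ℕ) (h : m = n + j),
      (∃ w : (C.P m).M →ₗ[𝒜.A] (D.P (n + 1)).M, ∀ x : (C.P (m + 1)).M,
        L.f m n h (C.d m x) - L'.f m n h (C.d m x) = D.d n (w (C.d m x))) ∧
      ∀ f : (D.P n).M →ₗ[𝒜.A] T, f ∘ₗ L.f m n h = f ∘ₗ L'.f m n h := by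
    intro n
    induction n with
    | zero =>
      intro m h
      obtain rfl : m = j := by omega
      obtain ⟨w, hw⟩ := lift (C.projective m) (L.f m 0 h - L'.f m 0 h) (D.d 0) (by
        rintro _ ⟨x, rfl⟩
        rw [hε, LinearMap.mem_ker, LinearMap.sub_apply, map_sub]
        exact sub_eq_zero.2 (LinearMap.congr_fun h0 x))
      refine ⟨⟨w, fun x => ?_⟩, fun f => ?_⟩
      · exact (LinearMap.congr_fun hw (C.d m x)).symm
      · rw [← sub_eq_zero, ← LinearMap.comp_sub, ← hw, ← LinearMap.comp_assoc, D.hom_d hT,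
          LinearMap.zero_comp]
    | succ n ih =>
      intro m' h'
      obtain ⟨m, rfl⟩ : ∃ m, m' = m + 1 := ⟨n + j, by omega⟩
      have h : m = n + j := by omega
      obtain ⟨⟨w, hw⟩, -⟩ := ih m h
      obtain ⟨w', hw'⟩ := lift (C.projective (m + 1))
          (L.f (m + 1) (n + 1) h' - L'.f (m + 1) (n + 1) h' - w ∘ₗ C.d m) (D.d (n + 1)) (by
        rintro _ ⟨x, rfl⟩
        rw [D.exact, LinearMap.mem_ker]
        have e1 := LinearMap.congr_fun (L.comm m n h h') x
        have e2 := LinearMap.congr_fun (L'.comm m n h h') x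
        simp only [LinearMap.comp_apply] at e1 e2
        simp only [LinearMap.sub_apply, map_sub, LinearMap.comp_apply]
        rw [e1, e2, ← hw, sub_self])
      have hw2 : ∀ x, L.f (m + 1) (n + 1) h' x - L'.f (m + 1) (n + 1) h' x =
          D.d (n + 1) (w' x) + w (C.d m x) := by
        intro x
        have := LinearMap.congr_fun hw' x
        simp only [LinearMap.sub_apply, LinearMap.comp_apply] at this
        rw [this]; abel
      refine ⟨⟨w', fun x => ?_⟩, fun f => ?_⟩
      · rw [hw2, C.d_d, map_zero, add_zero]
      · ext x
        rw [← sub_eq_zero, LinearMap.comp_apply, LinearMap.comp_apply, ← map_sub, hw2, map_add]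
        have e1 := LinearMap.congr_fun (D.hom_d hT f) (w' x)
        have e2 := LinearMap.congr_fun (C.hom_d hT (f ∘ₗ w)) x
        simp only [LinearMap.comp_apply, LinearMap.zero_apply] at e1 e2
        rw [e1, e2, add_zero]
  exact (key n m h).2 f

end SMap

end GradedAlg

namespace GradedAlg

/-! ### Part 3: constructions of graded modules and the step lemma -/

variable {F : Type} [Field F] {𝒜 : GradedAlg F}

namespace GMod

/-- The image of a graded idempotent. -/
@[reducible] def idem (X : 𝒜.GMod) (e : GHom X X) (he : ∀ x, e.lin (e.lin x) = e.lin x) : 𝒜.GMod where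
  M := ↥(LinearMap.range e.lin)
  scomm := ⟨fun a c x => Subtype.ext (smul_comm a c (x : X.M))⟩
  tower := ⟨fun a c x => Subtype.ext (smul_assoc a c (x : X.M))⟩
  grading j := (X.grading j).comap ((LinearMap.range e.lin).subtype.restrictScalars F)
  sup_eq_top := by
    rw [eq_top_iff]
    rintro ⟨x, hx⟩ -
    have hex : e.lin x = x := by
      obtain ⟨y, rfl⟩ := hx
      exact he y
    have hp : ∀ j, X.pr j x ∈ LinearMap.range e.lin := fun j => ⟨X.pr j x, by
      rw [← e.pr_apply, hex]⟩
    obtain ⟨s, hs⟩ := X.exists_sum_pr x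
    have : (⟨x, hx⟩ : ↥(LinearMap.range e.lin)) = ∑ j ∈ s, ⟨X.pr j x, hp j⟩ := by
      apply Subtype.ext
      rw [AddSubmonoidClass.coe_finsetSum]
      exact hs.symm
    rw [this]
    refine Submodule.sum_mem _ fun j _ => ?_
    refine Submodule.mem_iSup_of_mem j ?_
    exact X.pr_mem j x
  indep := by
    refine iSupIndep_of_detect _
      (fun j => X.pr j ∘ₗ ((LinearMap.range e.lin).subtype.restrictScalars F)) ?_ ?_
    · intro i j hij x hx
      exact X.pr_of_mem_ne hx hij
    · intro j x hx h
      apply Subtype.ext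
      have : X.pr j (x : X.M) = x := X.pr_of_mem hx
      rw [← this]
      exact h
  smul_mem ha hx := X.smul_mem ha hx

section idem
variable (X : 𝒜.GMod) (e : GHom X X) (he : ∀ x, e.lin (e.lin x) = e.lin x)

def idemI : GHom (X.idem e he) X := ⟨(LinearMap.range e.lin).subtype, fun _ _ h => h⟩

def idemP : GHom X (X.idem e he) := ⟨e.lin.rangeRestrict, fun j x h => e.grad j x h⟩

theorem idem_pi (x : (X.idem e he).M) : (X.idemP e he).lin ((X.idemI e he).lin x) = x := by
  obtain ⟨_, y, rfl⟩ := x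
  exact Subtype.ext (he y)

theorem idem_ip (x : X.M) : (X.idemI e he).lin ((X.idemP e he).lin x) = e.lin x := rfl

theorem idem_projective (h : Module.Projective 𝒜.A X.M) :
    Module.Projective 𝒜.A (X.idem e he).M :=
  Module.Projective.of_split (X.idemI e he).lin (X.idemP e he).lin
    (LinearMap.ext (X.idem_pi e he))

theorem idemP_surj : Function.Surjective (X.idemP e he).lin := fun x => ⟨_, X.idem_pi e he x⟩

theorem idem_finite (h : Module.Finite 𝒜.A X.M) : Module.Finite 𝒜.A (X.idem e he).M :=
  Module.Finite.of_surjective _ (X.idemP_surj e he)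
end idem

theorem GenInDeg.of_surj {X Y : 𝒜.GMod} {s : ℤ} (h : X.GenInDeg s) (f : GHom X Y)
    (hf : Function.Surjective f.lin) : Y.GenInDeg s := by
  have h1 : Submodule.map f.lin (Submodule.span 𝒜.A (X.grading s : Set X.M)) = ⊤ := by
    rw [h, Submodule.map_top, LinearMap.range_eq_top.2 hf]
  rw [Submodule.map_span] at h1
  unfold GenInDeg
  rw [eq_top_iff, ← h1]
  refine Submodule.span_mono ?_
  rintro _ ⟨x, hx, rfl⟩
  exact f.grad _ _ hx

/-- powers -/
@[reducible] def pi (X : 𝒜.GMod) (r : ℕ) : 𝒜.GMod where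
  M := Fin r → X.M
  grading j := Submodule.pi Set.univ (fun _ => X.grading j)
  sup_eq_top := by
    classical
    rw [eq_top_iff]
    rintro x -
    have : x = ∑ i, Pi.single i (x i) := (Finset.univ_sum_single x).symm
    rw [this]
    refine Submodule.sum_mem _ fun i _ => ?_
    obtain ⟨s, hs⟩ := X.exists_sum_pr (x i)
    rw [← hs]
    have : (Pi.single i (∑ j ∈ s, X.pr j (x i)) : Fin r → X.M) =
        ∑ j ∈ s, Pi.single i (X.pr j (x i)) := map_sum (LinearMap.single F (fun _ : Fin r => X.M) i) _ _
    rw [this]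
    refine Submodule.sum_mem _ fun j _ => ?_
    refine Submodule.mem_iSup_of_mem j ?_
    rw [Submodule.mem_pi]
    intro l _
    by_cases hl : l = i
    · subst hl; simpa using X.pr_mem j (x l)
    · simp [Pi.single_eq_of_ne hl]
  indep := by
    refine iSupIndep_of_detect _ (fun j => (X.pr j).compLeft (Fin r)) ?_ ?_
    · intro i j hij x hx
      funext l
      exact X.pr_of_mem_ne (Submodule.mem_pi.1 hx l trivial) hij
    · intro j x hx h
      funext l
      have : X.pr j (x l) = x l := X.pr_of_mem (Submodule.mem_pi.1 hx l trivial)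
      rw [← this]
      exact congrFun h l
  smul_mem ha hx := Submodule.mem_pi.2 fun l _ => X.smul_mem ha (Submodule.mem_pi.1 hx l trivial)

theorem GenInDeg.pi {X : 𝒜.GMod} {s : ℤ} (h : X.GenInDeg s) (r : ℕ) : (X.pi r).GenInDeg s := by
  classical
  unfold GenInDeg
  rw [eq_top_iff]
  rintro x -
  have : x = ∑ i, Pi.single i (x i) := (Finset.univ_sum_single x).symm
  rw [this]
  refine Submodule.sum_mem _ fun i _ => ?_
  have hx : x i ∈ Submodule.span 𝒜.A (X.grading s : Set X.M) := by rw [h]; trivial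
  have h2 := Submodule.mem_map_of_mem (f := LinearMap.single 𝒜.A (fun _ : Fin r => X.M) i) hx
  rw [Submodule.map_span] at h2
  refine Submodule.span_mono ?_ h2
  rintro _ ⟨y, hy, rfl⟩
  refine Submodule.mem_pi.2 fun l _ => ?_
  by_cases hl : l = i
  · subst hl; simpa using hy
  · simp [Pi.single_eq_of_ne hl]

/-- shift -/
@[reducible] def shift (X : 𝒜.GMod) (s : ℤ) : 𝒜.GMod where
  M := X.M
  grading j := X.grading (j + s)
  sup_eq_top := by
    rw [← X.sup_eq_top]
    exact (Equiv.addRight s).iSup_comp (g := X.grading)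
  indep := X.indep.comp (Equiv.addRight s).injective
  smul_mem {i j a m} ha hx := by
    have := X.smul_mem ha hx
    rwa [← add_assoc] at this

theorem GenInDeg.shift {X : 𝒜.GMod} {s t t' : ℤ} (h : X.GenInDeg t) (ht : t' + s = t) :
    (X.shift s).GenInDeg t' := by
  subst ht
  exact h

end GMod

/-- powers of graded maps -/
def GHom.pi {X Y : 𝒜.GMod} (f : GHom X Y) (r : ℕ) : GHom (X.pi r) (Y.pi r) where
  lin := f.lin.compLeft (Fin r)
  grad j _ hx := Submodule.mem_pi.2 fun l _ => f.grad j _ (Submodule.mem_pi.1 hx l trivial)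

/-- linear complexes -/
structure LCx (𝒜 : GradedAlg F) (δ : ℕ → ℤ) where
  P : ℕ → 𝒜.GMod
  d : ∀ n : ℕ, GHom (P (n + 1)) (P n)
  fg : ∀ n, Module.Finite 𝒜.A (P n).M
  projective : ∀ n, Module.Projective 𝒜.A (P n).M
  exact : ∀ n, LinearMap.range (d (n + 1)).lin = LinearMap.ker (d n).lin
  gen : ∀ n, (P n).GenInDeg (δ n)
  lt : ∀ n, δ n < δ (n + 1)

variable {δ : ℕ → ℤ}

namespace LCx

theorem minimal (C : LCx 𝒜 δ) (n : ℕ) :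
    LinearMap.range (C.d n).lin ≤ 𝒜.jideal • (⊤ : Submodule 𝒜.A (C.P n).M) :=
  GHom.range_le_JX (C.gen _) (C.gen _) (C.lt n) _

@[reducible] def cx (C : LCx 𝒜 δ) : PCx 𝒜 where
  P := C.P
  d n := (C.d n).lin
  projective := C.projective
  exact := C.exact
  minimal := C.minimal

theorem mem_range_of_d (C : LCx 𝒜 δ) {n : ℕ} {x : (C.P (n + 1)).M} (h : (C.d n).lin x = 0) :
    ∃ y, (C.d (n + 1)).lin y = x := by
  have : x ∈ LinearMap.range (C.d (n + 1)).lin := by rw [C.exact]; exact h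
  exact this

theorem d_d (C : LCx 𝒜 δ) {n : ℕ} (x : (C.P (n + 2)).M) :
    (C.d n).lin ((C.d (n + 1)).lin x) = 0 := C.cx.d_d n x

end LCx

/-- graded chain maps -/
structure LMap (C D : LCx 𝒜 δ) where
  f : ∀ n, GHom (C.P n) (D.P n)
  comm : ∀ n x, (D.d n).lin ((f (n + 1)).lin x) = (f n).lin ((C.d n).lin x)

namespace LMap

variable {C D E : LCx 𝒜 δ}

def toS (a : LMap C D) : SMap C.cx D.cx 0 :=
  SMap.ofChain (C := C.cx) (D := D.cx) (fun n => (a.f n).lin) (fun n => LinearMap.ext (a.comm n))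

@[simp] theorem toS_f (a : LMap C D) (n : ℕ) (h : n = n + 0) : a.toS.f n n h = (a.f n).lin := rfl

def comp (b : LMap D E) (a : LMap C D) : LMap C E where
  f n := (b.f n).comp (a.f n)
  comm n x := by
    change (E.d n).lin ((b.f (n + 1)).lin ((a.f (n + 1)).lin x)) =
      (b.f n).lin ((a.f n).lin ((C.d n).lin x))
    rw [b.comm, a.comm]

theorem exists_lift {V : 𝒜.GMod} (ε : GHom (D.P 0) V)
    (hε : LinearMap.range (D.d 0).lin = LinearMap.ker ε.lin)
    (hsurj : Function.Surjective ε.lin) (g : GHom (C.P 0) V)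
    (hg : ∀ x, g.lin ((C.d 0).lin x) = 0) :
    ∃ L : LMap C D, ∀ x, ε.lin ((L.f 0).lin x) = g.lin x := by
  obtain ⟨l0, hl0⟩ := GHom.exists_lift (C.projective 0) g ε (fun x => hsurj _)
  obtain ⟨l1, hl1⟩ := GHom.exists_lift (C.projective 1) (l0.comp (C.d 0)) (D.d 0) (fun x => by
    rw [hε, LinearMap.mem_ker]
    have := LinearMap.congr_fun hl0 ((C.d 0).lin x)
    rw [LinearMap.comp_apply, hg] at this
    exact this)
  let St (n : ℕ) := {p : GHom (C.P n) (D.P n) × GHom (C.P (n + 1)) (D.P (n + 1)) //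
    (D.d n).lin ∘ₗ p.2.lin = p.1.lin ∘ₗ (C.d n).lin}
  have step : ∀ n (p : St n), ∃ q : St (n + 1), q.1.1 = p.1.2 := by
    rintro n ⟨⟨u, v⟩, h⟩
    obtain ⟨w, hw⟩ := GHom.exists_lift (C.projective (n + 2)) (v.comp (C.d (n + 1))) (D.d (n + 1))
      (fun x => by
        rw [D.exact, LinearMap.mem_ker]
        have := LinearMap.congr_fun h ((C.d (n + 1)).lin x)
        rw [LinearMap.comp_apply, LinearMap.comp_apply, C.d_d, map_zero] at this
        exact this)
    exact ⟨⟨⟨v, w⟩, hw⟩, rfl⟩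
  choose nx hnx using step
  let sq : ∀ n, St n := fun n => Nat.rec ⟨⟨l0, l1⟩, hl1⟩ (fun n p => nx n p) n
  have hs : ∀ n, (sq (n + 1)).1.1 = (sq n).1.2 := fun n => hnx n (sq n)
  refine ⟨⟨fun n => (sq n).1.1, fun n x => ?_⟩, fun x => LinearMap.congr_fun hl0 x⟩
  rw [hs]
  exact LinearMap.congr_fun (sq n).2 x

theorem unique {V : Type} [AddCommGroup V] [Module 𝒜.A V] (ε : (D.P 0).M →ₗ[𝒜.A] V)
    (hε : LinearMap.range (D.d 0).lin = LinearMap.ker ε) (L L' : LMap C D)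
    (h0 : ∀ x, ε ((L.f 0).lin x) = ε ((L'.f 0).lin x)) (n : ℕ) : (L.f n).lin = (L'.f n).lin := by
  induction n with
  | zero =>
    refine GHom.eq_of_sub_mem (C.gen 0) (D.gen 0) _ _ fun x _ => ?_
    apply D.minimal 0
    rw [hε, LinearMap.mem_ker, map_sub, h0, sub_self]
  | succ n ih =>
    refine GHom.eq_of_sub_mem (C.gen _) (D.gen _) _ _ fun x _ => ?_
    apply D.minimal (n + 1)
    rw [D.exact, LinearMap.mem_ker, map_sub, L.comm, L'.comm, ih, sub_self]

end LMap

namespace LCx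

/-- powers -/
@[reducible] def pi (D : LCx 𝒜 δ) (r : ℕ) : LCx 𝒜 δ where
  P n := (D.P n).pi r
  d n := (D.d n).pi r
  fg n := by
    have := D.fg n
    exact Module.Finite.pi
  projective n := by
    have := D.projective n
    classical
    exact Module.Projective.of_equiv (DFinsupp.linearEquivFunOnFintype (R := 𝒜.A)
      (M := fun _ : Fin r => (D.P n).M))
  exact n := by
    ext x
    constructor
    · rintro ⟨y, rfl⟩
      funext l
      exact D.d_d (y l)
    · intro hx
      have : ∀ l, ∃ y, (D.d (n + 1)).lin y = x l := fun l => D.mem_range_of_d (congrFun hx l)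
      choose y hy using this
      exact ⟨y, funext hy⟩
  gen n := (D.gen n).pi r
  lt := D.lt

def single (D : LCx 𝒜 δ) {r : ℕ} (i : Fin r) : LMap D (D.pi r) where
  f n := ⟨LinearMap.single 𝒜.A (fun _ : Fin r => (D.P n).M) i, fun j x hx => by
    refine Submodule.mem_pi.2 fun l _ => ?_
    change (Pi.single i x : Fin r → (D.P n).M) l ∈ (D.P n).grading j
    by_cases hl : l = i
    · subst hl; simpa using hx
    · simp [Pi.single_eq_of_ne hl]⟩
  comm n x := by
    funext l
    change (D.d n).lin ((Pi.single i x : Fin r → (D.P (n+1)).M) l) =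
      (Pi.single i ((D.d n).lin x) : Fin r → (D.P n).M) l
    by_cases hl : l = i
    · subst hl; simp
    · simp [Pi.single_eq_of_ne hl]

def projL (D : LCx 𝒜 δ) {r : ℕ} (i : Fin r) : LMap (D.pi r) D where
  f _ := ⟨LinearMap.proj i, fun _ _ hx => Submodule.mem_pi.1 hx i trivial⟩
  comm _ _ := rfl

theorem sum_single_proj (D : LCx 𝒜 δ) (r n : ℕ) (x : ((D.pi r).P n).M) :
    ∑ i, ((D.single i).f n).lin (((D.projL i).f n).lin x) = x := by
  exact Finset.univ_sum_single (f := x)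

/-- direct summand of a linear complex -/
@[reducible] def idem (W : LCx 𝒜 δ) (e : LMap W W) (he : ∀ n x, (e.f n).lin ((e.f n).lin x) = (e.f n).lin x) :
    LCx 𝒜 δ where
  P n := (W.P n).idem (e.f n) (he n)
  d n := ((W.P n).idemP (e.f n) (he n)).comp
    ((W.d n).comp ((W.P (n + 1)).idemI (e.f (n + 1)) (he (n + 1))))
  fg n := (W.P n).idem_finite _ _ (W.fg n)
  projective n := (W.P n).idem_projective _ _ (W.projective n)
  exact n := by
    ext ⟨_, z, rfl⟩
    constructor
    · rintro ⟨y, hy⟩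
      rw [← hy]
      apply Subtype.ext
      change (e.f n).lin ((W.d n).lin ((e.f (n + 1)).lin ((W.d (n + 1)).lin _))) = 0
      rw [e.comm, W.d_d, map_zero, map_zero]
    · intro h
      have h1 : (e.f n).lin ((W.d n).lin ((e.f (n + 1)).lin z)) = 0 := congrArg Subtype.val h
      rw [← e.comm, he] at h1
      obtain ⟨w, hw⟩ := W.mem_range_of_d h1
      refine ⟨((W.P (n + 2)).idemP (e.f (n + 2)) (he (n + 2))).lin w, Subtype.ext ?_⟩
      change (e.f (n + 1)).lin ((W.d (n + 1)).lin ((e.f (n + 2)).lin w)) = (e.f (n + 1)).lin z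
      rw [e.comm, he, hw, he]
  gen n := (W.gen n).of_surj _ ((W.P n).idemP_surj _ _)
  lt := W.lt

section idem
variable (W : LCx 𝒜 δ) (e : LMap W W) (he : ∀ n x, (e.f n).lin ((e.f n).lin x) = (e.f n).lin x)

def idemI : LMap (W.idem e he) W where
  f n := (W.P n).idemI (e.f n) (he n)
  comm n x := by
    obtain ⟨_, z, rfl⟩ := x
    change (W.d n).lin ((e.f (n + 1)).lin z) = (e.f n).lin ((W.d n).lin ((e.f (n + 1)).lin z))
    rw [← e.comm, he]

def idemP : LMap W (W.idem e he) where
  f n := (W.P n).idemP (e.f n) (he n)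
  comm n x := by
    apply Subtype.ext
    change (e.f n).lin ((W.d n).lin ((e.f (n + 1)).lin x)) = (e.f n).lin ((W.d n).lin x)
    rw [e.comm, he]

theorem idem_pi (n : ℕ) (x : ((W.idem e he).P n).M) :
    ((W.idemP e he).f n).lin (((W.idemI e he).f n).lin x) = x := (W.P n).idem_pi _ _ x

theorem idem_ip (n : ℕ) (x : (W.P n).M) :
    ((W.idemI e he).f n).lin (((W.idemP e he).f n).lin x) = (e.f n).lin x := rfl

end idem

end LCx

end GradedAlg

namespace GradedAlg

/-! ### Part 4: the step lemma -/

variable {F : Type} [Field F] {𝒜 : GradedAlg F} {δ : ℕ → ℤ}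

section coker
variable {C Q : LCx 𝒜 δ} (α : LMap C Q) (r : ∀ n, GHom (Q.P n) (C.P n))
  (hr : ∀ n x, (r n).lin ((α.f n).lin x) = x)

/-- the complementary idempotent -/
def cokE (n : ℕ) : GHom (Q.P n) (Q.P n) where
  lin := LinearMap.id - (α.f n).lin ∘ₗ (r n).lin
  grad j x hx := sub_mem hx ((α.f n).grad j _ ((r n).grad j x hx))

theorem cokE_apply (n : ℕ) (x : (Q.P n).M) :
    (cokE α r n).lin x = x - (α.f n).lin ((r n).lin x) := rfl

theorem cokE_α
    (hr : ∀ n x, (r n).lin ((α.f n).lin x) = x)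
    (n : ℕ) (x : (C.P n).M) : (cokE α r n).lin ((α.f n).lin x) = 0 := by
  rw [cokE_apply, hr, sub_self]

theorem cokE_idem
    (hr : ∀ n x, (r n).lin ((α.f n).lin x) = x)
    (n : ℕ) (x : (Q.P n).M) :
    (cokE α r n).lin ((cokE α r n).lin x) = (cokE α r n).lin x := by
  conv_lhs => rw [cokE_apply α r n x, map_sub, cokE_α α r hr, sub_zero]

theorem cokE_d
    (hr : ∀ n x, (r n).lin ((α.f n).lin x) = x)
    (n : ℕ) (x : (Q.P (n + 1)).M) :
    (cokE α r n).lin ((Q.d n).lin ((cokE α r (n + 1)).lin x)) =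
      (cokE α r n).lin ((Q.d n).lin x) := by
  rw [cokE_apply α r (n + 1), map_sub, map_sub, α.comm, cokE_α α r hr, sub_zero]

/-- the shifted cokernel complex -/
@[reducible] def cok (c : ℕ) (s : ℤ) (hc : 1 ≤ c) (hδ : ∀ n, δ (c + n) = δ n + s) : LCx 𝒜 δ where
  P n := ((Q.P (c + n)).idem (cokE α r (c + n)) (cokE_idem α r hr (c + n))).shift s
  d n :=
    { lin := (((Q.P (c + n)).idemP (cokE α r (c + n)) (cokE_idem α r hr (c + n))).comp
        ((Q.d (c + n)).comp
          ((Q.P (c + n + 1)).idemI (cokE α r (c + n + 1)) (cokE_idem α r hr (c + n + 1))))).lin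
      grad := fun j x hx => (((Q.P (c + n)).idemP (cokE α r (c + n)) (cokE_idem α r hr (c + n))).comp
        ((Q.d (c + n)).comp
          ((Q.P (c + n + 1)).idemI (cokE α r (c + n + 1)) (cokE_idem α r hr (c + n + 1))))).grad
            (j + s) x hx }
  fg n := (Q.P (c + n)).idem_finite (cokE α r (c + n)) (cokE_idem α r hr (c + n)) (Q.fg (c + n))
  projective n := (Q.P (c + n)).idem_projective (cokE α r (c + n)) (cokE_idem α r hr (c + n)) (Q.projective (c + n))
  exact n := by
    ext ⟨_, z, rfl⟩
    constructor
    · rintro ⟨y, hy⟩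
      rw [← hy]
      apply Subtype.ext
      change (cokE α r (c + n)).lin ((Q.d (c + n)).lin ((cokE α r (c + n + 1)).lin
        ((Q.d (c + n + 1)).lin _))) = 0
      rw [cokE_d α r hr, Q.d_d, map_zero]
    · intro h
      have h1 : (cokE α r (c + n)).lin ((Q.d (c + n)).lin ((cokE α r (c + n + 1)).lin z)) = 0 :=
        congrArg Subtype.val h
      rw [cokE_d α r hr, cokE_apply, sub_eq_zero] at h1
      obtain ⟨l, hl⟩ : ∃ l, c + n = l + 1 := ⟨c + n - 1, by omega⟩
      have key : ∀ (l' : ℕ) (hl : l' = l + 1) (z : (Q.P (l' + 1)).M),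
          (Q.d l').lin z = (α.f l').lin ((r l').lin ((Q.d l').lin z)) →
          ∃ w, (Q.d (l' + 1)).lin w = z - (α.f (l' + 1)).lin
            ((r (l' + 1)).lin (z - (Q.d (l' + 1)).lin w)) := by
        intro l' hl z hz
        subst hl
        have h2 : (α.f l).lin ((C.d l).lin ((r (l + 1)).lin ((Q.d (l + 1)).lin z))) = 0 := by
          rw [← α.comm, ← hz, Q.d_d]
        have h3 : (C.d l).lin ((r (l + 1)).lin ((Q.d (l + 1)).lin z)) = 0 := by
          rw [← hr l ((C.d l).lin _), h2, map_zero]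
        obtain ⟨x', hx'⟩ := C.mem_range_of_d h3
        have h4 : (Q.d (l + 1)).lin (z - (α.f (l + 2)).lin x') = 0 := by
          rw [map_sub, α.comm, hx', ← hz, sub_self]
        obtain ⟨w, hw⟩ := Q.mem_range_of_d h4
        refine ⟨w, ?_⟩
        rw [hw, sub_sub_cancel, hr]
      obtain ⟨w, hw⟩ := key _ hl z h1
      refine ⟨((Q.P (c + n + 2)).idemP (cokE α r (c + n + 2)) (cokE_idem α r hr (c + n + 2))).lin w,
        Subtype.ext ?_⟩
      change (cokE α r (c + n + 1)).lin ((Q.d (c + n + 1)).lin ((cokE α r (c + n + 2)).lin w)) =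
        (cokE α r (c + n + 1)).lin z
      rw [cokE_d α r hr, hw, map_sub, cokE_α α r hr, sub_zero]
  gen n := ((Q.gen (c + n)).of_surj _ ((Q.P (c + n)).idemP_surj (cokE α r (c + n))
    (cokE_idem α r hr (c + n)))).shift (hδ n).symm
  lt := Q.lt

/-- the projection onto the shifted cokernel -/
def cokβ (c : ℕ) (s : ℤ) (hc : 1 ≤ c) (hδ : ∀ n, δ (c + n) = δ n + s) :
    SMap Q.cx (cok α r hr c s hc hδ).cx c where
  f m n h := ((Q.P (c + n)).idemP (cokE α r (c + n)) (cokE_idem α r hr (c + n))).lin ∘ₗ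
    Q.cx.cast (by omega)
  comm m n h h' := by
    obtain rfl : m = c + n := by omega
    ext x
    exact cokE_d α r hr (c + n) x

end coker

/-- The output of one step of the construction of the Koszul resolution. -/
structure StepData (T : 𝒜.GMod) (R : PCx 𝒜) (c : ℕ) (C : LCx 𝒜 δ) where
  Q : LCx 𝒜 δ
  S : LCx 𝒜 δ
  α : LMap C Q
  β : SMap Q.cx S.cx c
  a_surj : ∀ n (f : (C.P n).M →ₗ[𝒜.A] T.M), ∃ g : (Q.P n).M →ₗ[𝒜.A] T.M, g ∘ₗ (α.f n).lin = f
  a_inj : ∀ g : (Q.P 0).M →ₗ[𝒜.A] T.M, g ∘ₗ (α.f 0).lin = 0 → g = 0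
  b_inj : ∀ m n h (g : (S.P n).M →ₗ[𝒜.A] T.M), g ∘ₗ β.f m n h = 0 → g = 0
  b_a : ∀ m n h, β.f m n h ∘ₗ (α.f m).lin = 0
  b_exact : ∀ m n h (g : (Q.P m).M →ₗ[𝒜.A] T.M), g ∘ₗ (α.f m).lin = 0 →
    ∃ g' : (S.P n).M →ₗ[𝒜.A] T.M, g' ∘ₗ β.f m n h = g
  r : ℕ
  π : Fin r → SMap R Q.cx 0
  ι : Fin r → SMap Q.cx R 0
  sum_eq : ∀ n (g : (Q.P n).M →ₗ[𝒜.A] T.M),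
    ∑ i, g ∘ₗ (π i).f n n rfl ∘ₗ (ι i).f n n rfl = g

theorem IsTrivialGMod.kill {T : 𝒜.GMod} (hT : IsTrivialGMod T) :
    ∀ a ∈ 𝒜.jideal, ∀ v : T.M, a • v = 0 := by
  obtain ⟨-, ⟨e⟩⟩ := hT
  intro a ha v
  apply e.injective
  rw [map_smul, map_zero]
  obtain ⟨x, hx⟩ := Submodule.Quotient.mk_surjective _ (e v)
  rw [← hx, ← Submodule.Quotient.mk_smul, Submodule.Quotient.mk_eq_zero]
  exact jideal_mul_mem ha x

theorem IsTrivialGMod.grading_zero {T : 𝒜.GMod} (hT : IsTrivialGMod T) : T.grading 0 = ⊤ := by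
  rw [eq_top_iff, ← T.sup_eq_top]
  refine iSup_le fun j => ?_
  by_cases h : j = 0
  · rw [h]
  · rw [hT.1 j h]; exact bot_le

/-- modules killed by `J` are direct summands of powers of `T` -/
theorem exists_summand (hs : IsSemisimpleRing ↥(𝒜.grading 0)) {T : 𝒜.GMod} (hT : IsTrivialGMod T)
    (V : Type) [AddCommGroup V] [Module 𝒜.A V] (hV : ∀ a ∈ 𝒜.jideal, ∀ v : V, a • v = 0)
    (hf : Module.Finite 𝒜.A V) :
    ∃ (r : ℕ) (ι : V →ₗ[𝒜.A] (Fin r → T.M)) (π : (Fin r → T.M) →ₗ[𝒜.A] V),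
      ∀ v, π (ι v) = v := by
  have hk := hT.kill
  obtain ⟨-, ⟨e⟩⟩ := hT
  obtain ⟨r, v, hv⟩ := Module.Finite.exists_fin (R := 𝒜.A) (M := V)
  let ls : V → (𝒜.A ⧸ 𝒜.jideal) →ₗ[𝒜.A] V := fun w =>
    Submodule.liftQ 𝒜.jideal (LinearMap.toSpanSingleton 𝒜.A V w) (fun a ha => hV a ha w)
  let π : (Fin r → T.M) →ₗ[𝒜.A] V := ∑ i, ls (v i) ∘ₗ e.toLinearMap ∘ₗ LinearMap.proj i
  have hπ : Function.Surjective π := by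
    intro y
    have hy : y ∈ Submodule.span 𝒜.A (Set.range v) := by rw [hv]; trivial
    obtain ⟨a, ha⟩ := (Submodule.mem_span_range_iff_exists_fun 𝒜.A).1 hy
    refine ⟨fun i => e.symm (Submodule.Quotient.mk (a i)), ?_⟩
    rw [← ha]
    simp only [π, LinearMap.sum_apply, LinearMap.comp_apply, LinearMap.proj_apply,
      LinearEquiv.coe_coe, LinearEquiv.apply_symm_apply]
    rfl
  have : IsSemisimpleModule 𝒜.A (Fin r → T.M) :=
    semisimple_of_kill hs _ fun a ha v => funext fun l => hk a ha _
  obtain ⟨ι, hι⟩ := IsSemisimpleModule.lifting_property π hπ LinearMap.id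
  exact ⟨r, ι, π, LinearMap.congr_fun hι⟩

/-- maps into modules killed by `J` concentrated in degree zero are graded -/
def toTriv {X Y : 𝒜.GMod} (hX : X.GenInDeg 0) (hY : Y.grading 0 = ⊤)
    (hk : ∀ a ∈ 𝒜.jideal, ∀ v : Y.M, a • v = 0) (f : X.M →ₗ[𝒜.A] Y.M) : GHom X Y where
  lin := f
  grad j x hx := by
    by_cases h : j = 0
    · rw [h, hY]; trivial
    · have : x ∈ 𝒜.jideal • (⊤ : Submodule 𝒜.A X.M) :=
        (hX.mem_JX x).2 (X.pr_of_mem_ne hx h)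
      rw [map_JX_zero hk f this]
      exact zero_mem _

theorem exists_step (hs : IsSemisimpleRing ↥(𝒜.grading 0)) {T : 𝒜.GMod} (hT : IsTrivialGMod T)
    (RT : MinRes T) (D : LCx 𝒜 δ) (ε : GHom (D.P 0) T)
    (hε : LinearMap.range (D.d 0).lin = LinearMap.ker ε.lin)
    (hsurj : Function.Surjective ε.lin) (h0 : δ 0 = 0)
    (c : ℕ) (s : ℤ) (hc : 1 ≤ c) (hδ : ∀ n, δ (c + n) = δ n + s) (C : LCx 𝒜 δ) :
    Nonempty (StepData T RT.cx c C) := by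
  have hk := hT.kill
  -- the map `q : C_0 → T^r`
  obtain ⟨r, ιV, πV, hV⟩ := exists_summand hs hT
    ((C.P 0).M ⧸ (𝒜.jideal • (⊤ : Submodule 𝒜.A (C.P 0).M))) kill_quot (by
      have := C.fg 0
      infer_instance)
  have hTr0 : (T.pi r).grading 0 = ⊤ := by
    rw [eq_top_iff]
    rintro x -
    refine Submodule.mem_pi.2 fun l _ => ?_
    rw [hT.grading_zero]; trivial
  have hTrk : ∀ a ∈ 𝒜.jideal, ∀ v : (T.pi r).M, a • v = 0 := fun a ha v => funext fun l => hk a ha _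
  have gen0 : ∀ X : LCx 𝒜 δ, (X.P 0).GenInDeg 0 := fun X => h0 ▸ X.gen 0
  let J0 := 𝒜.jideal • (⊤ : Submodule 𝒜.A (C.P 0).M)
  let q : GHom (C.P 0) (T.pi r) := toTriv (gen0 C) hTr0 hTrk (ιV ∘ₗ J0.mkQ)
  let W := D.pi r
  let εW : GHom (W.P 0) (T.pi r) := ε.pi r
  have hεW : LinearMap.range (W.d 0).lin = LinearMap.ker εW.lin := by
    ext x
    constructor
    · rintro ⟨y, rfl⟩
      funext l
      have : (D.d 0).lin (y l) ∈ LinearMap.ker ε.lin := hε ▸ ⟨y l, rfl⟩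
      exact this
    · intro hx
      have : ∀ l, x l ∈ LinearMap.range (D.d 0).lin := fun l => by
        rw [hε]; exact congrFun hx l
      choose y hy using this
      exact ⟨y, funext hy⟩
  have hsW : Function.Surjective εW.lin := by
    intro x
    choose y hy using fun l => hsurj (x l)
    exact ⟨y, funext hy⟩
  let g : GHom (W.P 0) (T.pi r) := toTriv (gen0 W) hTr0 hTrk ((ιV ∘ₗ πV) ∘ₗ εW.lin)
  obtain ⟨e, he0⟩ := LMap.exists_lift (C := W) εW hεW hsW g (fun x =>
    map_JX_zero hTrk g.lin (W.minimal 0 ⟨x, rfl⟩))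
  obtain ⟨a, ha0⟩ := LMap.exists_lift (C := C) εW hεW hsW q (fun x =>
    map_JX_zero hTrk q.lin (C.minimal 0 ⟨x, rfl⟩))
  have he0' : ∀ x, εW.lin ((e.f 0).lin x) = ιV (πV (εW.lin x)) := he0
  have ha0' : ∀ x, εW.lin ((a.f 0).lin x) = ιV (J0.mkQ x) := ha0
  have he : ∀ n x, (e.f n).lin ((e.f n).lin x) = (e.f n).lin x := by
    intro n x
    have := LMap.unique εW.lin hεW (e.comp e) e (fun x => by
      change εW.lin ((e.f 0).lin ((e.f 0).lin x)) = _
      rw [he0', he0', hV]) n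
    exact LinearMap.congr_fun this x
  have hea : ∀ n x, (e.f n).lin ((a.f n).lin x) = (a.f n).lin x := by
    intro n x
    have := LMap.unique εW.lin hεW (e.comp a) a (fun x => by
      change εW.lin ((e.f 0).lin ((a.f 0).lin x)) = _
      rw [he0', ha0', hV]) n
    exact LinearMap.congr_fun this x
  let Q := W.idem e he
  let i : LMap Q W := W.idemI e he
  let p : LMap W Q := W.idemP e he
  have hpi : ∀ n x, (p.f n).lin ((i.f n).lin x) = x := W.idem_pi e he
  have hip : ∀ n x, (i.f n).lin ((p.f n).lin x) = (e.f n).lin x := W.idem_ip e he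
  let α : LMap C Q := p.comp a
  have hiα : ∀ n x, (i.f n).lin ((α.f n).lin x) = (a.f n).lin x := by
    intro n x
    change (i.f n).lin ((p.f n).lin ((a.f n).lin x)) = _
    rw [hip, hea]
  -- retractions
  have hret : ∀ n, ∃ ρ : GHom (Q.P n) (C.P n), ρ.lin ∘ₗ (α.f n).lin = LinearMap.id := by
    intro n
    induction n with
    | zero =>
      refine GHom.exists_retraction hs (C.gen 0) (Q.gen 0) (Q.projective 0) _ ?_
      intro x hx hx0
      have h1 : (a.f 0).lin x = 0 := by rw [← hiα, hx0, map_zero]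
      have h2 : ιV (J0.mkQ x) = 0 := by rw [← ha0', h1, map_zero]
      have h3 : J0.mkQ x = 0 := by rw [← hV (J0.mkQ x), h2, map_zero]
      have h4 : x ∈ J0 := (Submodule.Quotient.mk_eq_zero _).1 h3
      rw [← (C.P 0).pr_of_mem hx]
      exact ((C.gen 0).mem_JX x).1 h4
    | succ n ih =>
      obtain ⟨ρ, hρ⟩ := ih
      refine GHom.exists_retraction hs (C.gen _) (Q.gen _) (Q.projective _) _ ?_
      intro x hx hx0
      have h1 : (α.f n).lin ((C.d n).lin x) = 0 := by rw [← α.comm, hx0, map_zero]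
      have h2 : (C.d n).lin x = 0 := by
        have := LinearMap.congr_fun hρ ((C.d n).lin x)
        rw [LinearMap.comp_apply, h1, map_zero] at this
        exact this.symm
      obtain ⟨y, hy⟩ := C.mem_range_of_d h2
      rw [← (C.P _).pr_of_mem hx]
      exact ((C.gen _).mem_JX x).1 (C.minimal _ ⟨y, hy⟩)
  choose ρ hρ using hret
  have hρ' : ∀ n x, (ρ n).lin ((α.f n).lin x) = x := fun n => LinearMap.congr_fun (hρ n)
  -- comparison of the resolutions of `T`
  obtain ⟨u, hu⟩ := SMap.exists_lift (C := RT.cx) (D := D.cx) ε.lin hε hsurj 0 RT.aug.lin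
    (RT.cx.hom_d hk _)
  obtain ⟨v, hv⟩ := SMap.exists_lift (C := D.cx) (D := RT.cx) RT.aug.lin RT.exact_aug RT.aug_surj 0
    ε.lin (D.cx.hom_d hk _)
  have huv : ∀ n (f : (D.P n).M →ₗ[𝒜.A] T.M), f ∘ₗ u.f n n rfl ∘ₗ v.f n n rfl = f := by
    intro n f
    have := SMap.lift_unique (C := D.cx) (D := D.cx) hk ε.lin hε (SMap.comp u v) (SMap.idS D.cx) (by
      change ε.lin ∘ₗ (u.f 0 0 rfl ∘ₗ v.f 0 0 rfl) = ε.lin ∘ₗ LinearMap.id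
      rw [← LinearMap.comp_assoc]
      exact (congrArg (· ∘ₗ v.f 0 0 rfl) hu).trans hv) n n rfl f
    exact this
  refine ⟨{
    Q := Q
    S := cok α ρ hρ' c s hc hδ
    α := α
    β := cokβ α ρ hρ' c s hc hδ
    a_surj := ?_
    a_inj := ?_
    b_inj := ?_
    b_a := ?_
    b_exact := ?_
    r := r
    π := fun l => SMap.comp (p.comp (D.single l)).toS u
    ι := fun l => SMap.comp v ((D.projL l).comp i).toS
    sum_eq := ?_ }⟩
  · intro n f
    refine ⟨f ∘ₗ (ρ n).lin, ?_⟩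
    rw [LinearMap.comp_assoc, hρ, LinearMap.comp_id]
  · intro f hf
    ext y
    obtain ⟨x, hx⟩ := J0.mkQ_surjective (πV (εW.lin ((i.f 0).lin y)))
    have h1 : εW.lin ((i.f 0).lin y - (a.f 0).lin x) = 0 := by
      have h2 : (i.f 0).lin y = (e.f 0).lin ((i.f 0).lin y) := by
        rw [← hip, hpi]
      rw [map_sub, ha0', hx, h2, he0', hV, sub_self]
    have h3 : (i.f 0).lin y - (a.f 0).lin x ∈ 𝒜.jideal • (⊤ : Submodule 𝒜.A (W.P 0).M) := by
      apply W.minimal 0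
      rw [hεW]
      exact h1
    have h4 := map_JX_zero hk (f ∘ₗ (p.f 0).lin) h3
    rw [map_sub, LinearMap.comp_apply, hpi] at h4
    have h5 := LinearMap.congr_fun hf x
    have h6 : f y - f ((α.f 0).lin x) = 0 := h4
    rw [LinearMap.comp_apply] at h5
    rw [h5] at h6
    simpa using h6
  · intro m n h f hf
    obtain rfl : m = c + n := by omega
    ext ⟨_, y, rfl⟩
    exact LinearMap.congr_fun hf y
  · intro m n h
    obtain rfl : m = c + n := by omega
    exact LinearMap.ext fun x => Subtype.ext (cokE_α α ρ hρ' _ x)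
  · intro m n h f hf
    obtain rfl : m = c + n := by omega
    refine ⟨f ∘ₗ (LinearMap.range (cokE α ρ (c + n)).lin).subtype, ?_⟩
    ext x
    change f (x - (α.f (c + n)).lin ((ρ (c + n)).lin x)) = f x
    have := LinearMap.congr_fun hf ((ρ (c + n)).lin x)
    rw [LinearMap.comp_apply] at this
    rw [map_sub, this]
    simp
  · intro n f
    have h1 : ∀ l : Fin r, f ∘ₗ (SMap.comp (p.comp (D.single l)).toS u).f n n rfl ∘ₗ
        (SMap.comp v ((D.projL l).comp i).toS).f n n rfl =
        (f ∘ₗ (p.f n).lin) ∘ₗ ((D.single l).f n).lin ∘ₗ ((D.projL l).f n).lin ∘ₗ (i.f n).lin := by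
      intro l
      have := huv n (f ∘ₗ (p.f n).lin ∘ₗ ((D.single l).f n).lin)
      ext x
      exact LinearMap.congr_fun this (((D.projL l).f n).lin ((i.f n).lin x))
    rw [Finset.sum_congr rfl fun l _ => h1 l]
    ext x
    rw [LinearMap.sum_apply]
    simp only [LinearMap.comp_apply]
    rw [← map_sum, ← map_sum]
    have := D.sum_single_proj r n ((i.f n).lin x)
    rw [this, hpi]

end GradedAlg

namespace GradedAlg

/-! ### Part 5: the Yoneda action on `Hom(-,T)` -/

variable {F : Type} [Field F] {𝒜 : GradedAlg F}

/-- addition of shift maps -/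
def SMap.add {C D : PCx 𝒜} {j : ℕ} (a b : SMap C D j) : SMap C D j where
  f m n h := a.f m n h + b.f m n h
  comm m n h h' := by
    rw [LinearMap.comp_add, LinearMap.add_comp, a.comm m n h h', b.comm m n h h']

/-- scalar multiples of shift maps -/
def SMap.smul {C D : PCx 𝒜} {j : ℕ} (t : F) (a : SMap C D j) : SMap C D j where
  f m n h := t • a.f m n h
  comm m n h h' := by
    have := a.comm m n h h'
    ext x
    have := LinearMap.congr_fun this x
    simp only [LinearMap.comp_apply, LinearMap.smul_apply] at this ⊢
    rw [← this]
    exact LinearMap.map_smul_of_tower _ _ _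

/-- The data needed for the Yoneda algebra. -/
structure Ctx (𝒜 : GradedAlg F) where
  T : 𝒜.GMod
  hk : ∀ a ∈ 𝒜.jideal, ∀ v : T.M, a • v = 0
  RT : MinRes T
  c : ℕ

namespace Ctx
variable (X : Ctx 𝒜)

/-- cochains -/
abbrev H (C : PCx 𝒜) (n : ℕ) := (C.P n).M →ₗ[𝒜.A] X.T.M

/-- the resolution of `T` as a complex -/
abbrev R : PCx 𝒜 := X.RT.cx

variable {C D : PCx 𝒜}

theorem exists_lift {j : ℕ} (g : X.H C j) :
    ∃ L : SMap C X.R j, X.RT.aug.lin ∘ₗ L.f j 0 (by omega) = g :=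
  SMap.exists_lift (D := X.R) X.RT.aug.lin X.RT.exact_aug X.RT.aug_surj j g (C.hom_d X.hk g)

/-- a chosen lift -/
def lift {j : ℕ} (g : X.H C j) : SMap C X.R j := Classical.choose (X.exists_lift g)

theorem lift_spec {j : ℕ} (g : X.H C j) (h : j = 0 + j) :
    X.RT.aug.lin ∘ₗ (X.lift g).f j 0 h = g := Classical.choose_spec (X.exists_lift g)

/-- the action -/
def act {i j k : ℕ} (h : k = i + j) (f : X.H X.R i) (g : X.H C j) : X.H C k :=
  f ∘ₗ (X.lift g).f k i h

theorem act_eq {i j k : ℕ} (h : k = i + j) (f : X.H X.R i) (g : X.H C j) (L : SMap C X.R j)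
    (hL : X.RT.aug.lin ∘ₗ L.f j 0 (by omega) = g) : X.act h f g = f ∘ₗ L.f k i h :=
  SMap.lift_unique (D := X.R) X.hk X.RT.aug.lin X.RT.exact_aug (X.lift g) L
    ((X.lift_spec g _).trans hL.symm) k i h f

theorem act_comp {i j k s j' k' : ℕ} (h : k = i + j) (f : X.H X.R i) (g : X.H D j)
    (a : SMap C D s) (hj : j' = j + s) (hk : k' = k + s) (h' : k' = i + j') :
    (X.act h f g) ∘ₗ a.f k' k hk = X.act h' f (g ∘ₗ a.f j' j hj) := by
  subst h hj hk
  have key : ∀ (m : ℕ) (hm : m = j) (e1 : m = 0 + j) (e2 : j + s = m + s),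
      X.RT.aug.lin ∘ₗ (X.lift g).f m 0 e1 ∘ₗ a.f (j + s) m e2 = g ∘ₗ a.f (j + s) j rfl := by
    intro m hm e1 e2
    subst hm
    rw [← LinearMap.comp_assoc, X.lift_spec]
  rw [X.act_eq h' f (g ∘ₗ a.f (j + s) j rfl) (SMap.comp (X.lift g) a) (key _ (by omega) _ _)]
  rfl

theorem act_assoc {i j k ij jk n : ℕ} (h1 : ij = i + j) (h2 : n = ij + k) (h3 : jk = j + k)
    (h4 : n = i + jk) (f : X.H X.R i) (f' : X.H X.R j) (g : X.H C k) :
    X.act h2 (X.act h1 f f') g = X.act h4 f (X.act h3 f' g) :=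
  X.act_comp (C := C) (D := X.R) h1 f f' (X.lift g) h3 h2 h4

theorem act_add_left {i j k : ℕ} (h : k = i + j) (f f' : X.H X.R i) (g : X.H C j) :
    X.act h (f + f') g = X.act h f g + X.act h f' g := LinearMap.add_comp _ _ _

theorem act_zero_left {i j k : ℕ} (h : k = i + j) (g : X.H C j) :
    X.act h (0 : X.H X.R i) g = 0 := LinearMap.zero_comp _

theorem act_add_right {i j k : ℕ} (h : k = i + j) (f : X.H X.R i) (g g' : X.H C j) :
    X.act h f (g + g') = X.act h f g + X.act h f g' := by
  rw [X.act_eq h f (g + g') ((X.lift g).add (X.lift g'))]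
  · exact LinearMap.comp_add _ _ _
  · change X.RT.aug.lin ∘ₗ ((X.lift g).f j 0 _ + (X.lift g').f j 0 _) = _
    rw [LinearMap.comp_add, X.lift_spec, X.lift_spec]

theorem act_smul_left {i j k : ℕ} (h : k = i + j) (t : F) (f : X.H X.R i) (g : X.H C j) :
    X.act h (t • f) g = t • X.act h f g := LinearMap.smul_comp _ _ _

theorem act_smul_right {i j k : ℕ} (h : k = i + j) (t : F) (f : X.H X.R i) (g : X.H C j) :
    X.act h f (t • g) = t • X.act h f g := by
  have hc : ∀ {m : ℕ} {U : 𝒜.GMod} (f : U.M →ₗ[𝒜.A] X.T.M) (y : (C.P m).M →ₗ[𝒜.A] U.M),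
      f ∘ₗ (t • y) = t • (f ∘ₗ y) := by
    intro m U f y
    ext x
    exact LinearMap.map_smul_of_tower f t (y x)
  rw [X.act_eq h f (t • g) ((X.lift g).smul t)]
  · exact hc f _
  · change X.RT.aug.lin ∘ₗ (t • (X.lift g).f j 0 _) = _
    rw [hc, X.lift_spec]

theorem act_zero_right {i j k : ℕ} (h : k = i + j) (f : X.H X.R i) :
    X.act h f (0 : X.H C j) = 0 := by
  have := X.act_smul_right h (0 : F) f (0 : X.H C j)
  simpa using this

theorem act_one_left {j : ℕ} (h : j = 0 + j) (g : X.H C j) : X.act h X.RT.aug.lin g = g :=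
  X.lift_spec g h

theorem act_one_right {i : ℕ} (h : i = i + 0) (f : X.H X.R i) : X.act h f X.RT.aug.lin = f :=
  X.act_eq h f X.RT.aug.lin (SMap.idS X.R) rfl

/-! the graded pieces -/

/-- graded pieces of the module -/
def EF (C : PCx 𝒜) (n : ℕ) : Type := X.H C (X.c * n)

/-- graded pieces of the algebra -/
def BF (n : ℕ) : Type := X.H X.R (X.c * n)

instance (C : PCx 𝒜) (n : ℕ) : AddCommGroup (X.EF C n) :=
  inferInstanceAs (AddCommGroup (X.H C (X.c * n)))
instance (C : PCx 𝒜) (n : ℕ) : Module F (X.EF C n) := inferInstanceAs (Module F (X.H C (X.c * n)))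
instance (n : ℕ) : AddCommGroup (X.BF n) := inferInstanceAs (AddCommGroup (X.H X.R (X.c * n)))
instance (n : ℕ) : Module F (X.BF n) := inferInstanceAs (Module F (X.H X.R (X.c * n)))

theorem idx (c i j : ℕ) : c * (i + j) = c * i + c * j := Nat.mul_add c i j

/-- multiplication of homogeneous elements -/
def bmul {i j : ℕ} (f : X.BF i) (g : X.BF j) : X.BF (i + j) :=
  X.act (C := X.R) (idx X.c i j) f g

/-- action of homogeneous elements -/
def bact {i j : ℕ} (f : X.BF i) (g : X.EF C j) : X.EF C (i + j) :=
  X.act (idx X.c i j) f g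

theorem sig_eq {n n' i j : ℕ} (hn : n = n') (h : X.c * n = i + j) (h' : X.c * n' = i + j)
    (f : X.H X.R i) (g : X.H C j) :
    (⟨n, X.act h f g⟩ : Σ n, X.EF C n) = ⟨n', X.act h' f g⟩ := by
  subst hn
  rfl

theorem sig_eq_one {n n' : ℕ} (hn : n = n') (h : X.c * n = 0 + X.c * n') (g : X.H C (X.c * n')) :
    (⟨n, X.act h X.RT.aug.lin g⟩ : Σ n, X.EF C n) = ⟨n', g⟩ := by
  subst hn
  rw [X.act_one_left]

instance : GradedMonoid.GOne X.BF := ⟨(X.RT.aug.lin : X.H X.R 0)⟩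
instance : GradedMonoid.GMul X.BF := ⟨X.bmul⟩

instance : DirectSum.GRing X.BF where
  mul := X.bmul
  mul_zero _ := X.act_zero_right _ _
  zero_mul _ := X.act_zero_left _ _
  mul_add _ _ _ := X.act_add_right _ _ _ _
  add_mul _ _ _ := X.act_add_left _ _ _ _
  one := (X.RT.aug.lin : X.H X.R 0)
  one_mul := by
    rintro ⟨n, g⟩
    exact X.sig_eq_one (C := X.R) (Nat.zero_add n) _ g
  mul_one := by
    rintro ⟨n, g⟩
    exact congrArg (fun z => (⟨n, z⟩ : Σ n, X.BF n)) (X.act_one_right rfl g)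
  mul_assoc := by
    rintro ⟨i, f⟩ ⟨j, f'⟩ ⟨k, g⟩
    have h4 : X.c * (i + j + k) = X.c * i + X.c * (j + k) := by ring
    refine Eq.trans (congrArg (fun z => (⟨i + j + k, z⟩ : Σ n, X.BF n))
      (X.act_assoc (C := X.R) (idx X.c i j) (idx X.c (i + j) k) (idx X.c j k) h4 f f' g)) ?_
    exact X.sig_eq (C := X.R) (Nat.add_assoc i j k) h4 (idx X.c i (j + k)) f _
  natCast n := n • (show X.BF 0 from (X.RT.aug.lin : X.H X.R 0))
  natCast_zero := zero_smul _ _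
  natCast_succ n := succ_nsmul _ _
  intCast n := n • (show X.BF 0 from (X.RT.aug.lin : X.H X.R 0))
  intCast_ofNat n := natCast_zsmul _ n
  intCast_negSucc_ofNat n := negSucc_zsmul _ n

instance : DirectSum.Gmodule X.BF (X.EF C) where
  smul := X.bact
  one_smul := by
    rintro ⟨n, g⟩
    exact X.sig_eq_one (C := C) (Nat.zero_add n) _ g
  mul_smul := by
    rintro ⟨i, f⟩ ⟨j, f'⟩ ⟨k, g⟩
    have h4 : X.c * (i + j + k) = X.c * i + X.c * (j + k) := by ring
    refine Eq.trans (congrArg (fun z => (⟨i + j + k, z⟩ : Σ n, X.EF C n))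
      (X.act_assoc (C := C) (idx X.c i j) (idx X.c (i + j) k) (idx X.c j k) h4 f f' g)) ?_
    exact X.sig_eq (C := C) (Nat.add_assoc i j k) h4 (idx X.c i (j + k)) f _
  smul_add _ _ _ := X.act_add_right _ _ _ _
  smul_zero _ := X.act_zero_right _ _
  add_smul _ _ _ := X.act_add_left _ _ _ _
  zero_smul _ := X.act_zero_left _ _

/-- the algebra -/
abbrev EB : Type := DirectSum ℕ X.BF

/-- the module -/
abbrev EM (C : PCx 𝒜) : Type := DirectSum ℕ (X.EF C)

theorem of_mul {i j : ℕ} (f : X.BF i) (g : X.BF j) :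
    (DirectSum.of X.BF i f * DirectSum.of X.BF j g : X.EB) =
      DirectSum.of X.BF (i + j) (X.bmul f g) := DirectSum.of_mul_of f g

theorem of_smul {i j : ℕ} (f : X.BF i) (g : X.EF C j) :
    (DirectSum.of X.BF i f • DirectSum.of (X.EF C) j g : X.EM C) =
      DirectSum.of (X.EF C) (i + j) (X.bact f g) := DirectSum.Gmodule.of_smul_of _ _ f g

theorem fsmul_of {A : ℕ → Type} [∀ i, AddCommGroup (A i)] [∀ i, Module F (A i)] (t : F) (i : ℕ)
    (x : A i) : t • DirectSum.of A i x = DirectSum.of A i (t • x) :=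
  ((DirectSum.lof F ℕ A i).map_smul t x).symm

theorem smul_mul' (t : F) (x y : X.EB) : t • x * y = t • (x * y) := by
  induction x using DirectSum.induction_on with
  | zero => simp
  | add x x' hx hx' => rw [smul_add, add_mul, hx, hx', add_mul, smul_add]
  | of i f =>
    induction y using DirectSum.induction_on with
    | zero => simp
    | add y y' hy hy' => rw [mul_add, mul_add, smul_add, hy, hy']
    | of j g =>
      rw [fsmul_of, of_mul, of_mul, fsmul_of]
      exact congrArg _ (X.act_smul_left _ t f g)

theorem mul_smul' (t : F) (x y : X.EB) : x * t • y = t • (x * y) := by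
  induction x using DirectSum.induction_on with
  | zero => simp
  | add x x' hx hx' => rw [add_mul, hx, hx', add_mul, smul_add]
  | of i f =>
    induction y using DirectSum.induction_on with
    | zero => simp
    | add y y' hy hy' => rw [smul_add, mul_add, mul_add, smul_add, hy, hy']
    | of j g =>
      rw [fsmul_of, of_mul, of_mul, fsmul_of]
      exact congrArg _ (X.act_smul_right _ t f g)

theorem smul_smul1 (t : F) (x : X.EB) (y : X.EM C) : (t • x) • y = t • (x • y) := by
  induction x using DirectSum.induction_on with
  | zero => simp
  | add x x' hx hx' => rw [smul_add, add_smul, hx, hx', add_smul, smul_add]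
  | of i f =>
    induction y using DirectSum.induction_on with
    | zero => simp
    | add y y' hy hy' => rw [smul_add, smul_add, smul_add, hy, hy']
    | of j g =>
      rw [fsmul_of, of_smul, of_smul, fsmul_of]
      exact congrArg _ (X.act_smul_left _ t f g)

theorem smul_smul2 (t : F) (x : X.EB) (y : X.EM C) : x • (t • y) = t • (x • y) := by
  induction x using DirectSum.induction_on with
  | zero => simp
  | add x x' hx hx' => rw [add_smul, hx, hx', add_smul, smul_add]
  | of i f =>
    induction y using DirectSum.induction_on with
    | zero => simp
    | add y y' hy hy' => rw [smul_add, smul_add, smul_add, smul_add, hy, hy']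
    | of j g =>
      rw [fsmul_of, of_smul, of_smul, fsmul_of]
      exact congrArg _ (X.act_smul_right _ t f g)

instance : Algebra F X.EB := Algebra.ofModule X.smul_mul' X.mul_smul'

end Ctx

end GradedAlg

namespace GradedAlg

/-! ### Part 6: the graded algebra and graded modules -/

variable {F : Type} [Field F] {𝒜 : GradedAlg F}

section DS
variable {A : ℕ → Type} [∀ i, AddCommGroup (A i)] [∀ i, Module F (A i)]

theorem ds_mem (S : AddSubmonoid (DirectSum ℕ A)) (x : DirectSum ℕ A)
    (h : ∀ n, DirectSum.of A n (x n) ∈ S) : x ∈ S := by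
  classical
  rw [← DirectSum.sum_support_of x]
  exact sum_mem fun n _ => h n

variable {ι : Type} (e : ℕ → ι)

/-- homogeneous elements of a direct sum -/
def dgr (F : Type) [Field F] (A : ℕ → Type) [∀ i, AddCommGroup (A i)] [∀ i, Module F (A i)]
    {ι : Type} (e : ℕ → ι) (j : ι) : Submodule F (DirectSum ℕ A) where
  carrier := {x | ∀ n, e n ≠ j → x n = 0}
  zero_mem' := fun n _ => rfl
  add_mem' := fun {x y} hx hy n hn => by
    rw [DirectSum.add_apply, hx n hn, hy n hn, add_zero]
  smul_mem' := fun t x hx n hn => by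
    change t • x n = 0
    rw [hx n hn, smul_zero]

theorem of_mem_dgr (n : ℕ) (x : A n) : DirectSum.of A n x ∈ dgr F A e (e n) := by
  intro m hm
  exact DirectSum.of_eq_of_ne _ _ _ (fun h => hm (by rw [h]))

theorem dgr_sup : (⨆ j, dgr F A e j) = ⊤ := by
  rw [eq_top_iff]
  rintro x -
  refine ds_mem (⨆ j, dgr F A e j).toAddSubmonoid x fun n => ?_
  exact Submodule.mem_iSup_of_mem (e n) (of_mem_dgr e n _)

theorem dgr_indep : iSupIndep (dgr F A e) := by
  classical
  refine iSupIndep_of_detect (Y := ∀ n, A n) _ (fun j =>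
    { toFun := fun x n => if e n = j then x n else 0
      map_add' := fun x y => by
        funext n
        by_cases h : e n = j
        · simp [h]
        · simp [h]
      map_smul' := fun t x => by
        funext n
        by_cases h : e n = j
        · simp only [h, if_true, Pi.smul_apply]
          rfl
        · simp [h] }) ?_ ?_
  · intro i j hij x hx
    funext n
    change (if e n = j then x n else 0) = 0
    split_ifs with h
    · exact hx n (fun h' => hij (h'.symm.trans h))
    · rfl
  · intro j x hx h0
    refine DFinsupp.ext fun n => ?_
    by_cases h : e n = j
    · have := congrFun h0 n
      change (if e n = j then x n else 0) = 0 at this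
      rwa [if_pos h] at this
    · exact hx n h

theorem eq_of_dgr (he : Function.Injective e) {n : ℕ} {x : DirectSum ℕ A}
    (hx : x ∈ dgr F A e (e n)) : x = DirectSum.of A n (x n) := by
  refine DFinsupp.ext fun m => ?_
  by_cases h : m = n
  · subst h
    exact (DirectSum.of_eq_same _ _).symm
  · rw [hx m (fun h' => h (he h'))]
    exact (DirectSum.of_eq_of_ne _ _ _ h).symm

/-- homogeneous elements are elements of the pieces -/
def dgrEquiv (he : Function.Injective e) (n : ℕ) : ↥(dgr F A e (e n)) ≃ₗ[F] A n where
  toFun x := x.1 n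
  invFun a := ⟨DirectSum.of A n a, of_mem_dgr e n a⟩
  map_add' _ _ := rfl
  map_smul' _ _ := rfl
  left_inv x := Subtype.ext (eq_of_dgr e he x.2).symm
  right_inv a := DirectSum.of_eq_same _ _

end DS

namespace Ctx
variable (X : Ctx 𝒜)

theorem gradedAlg_mul {i j : ℕ} {x y : X.EB} (hx : x ∈ dgr F X.BF (fun n => n) i)
    (hy : y ∈ dgr F X.BF (fun n => n) j) : x * y ∈ dgr F X.BF (fun n => n) (i + j) := by
  rw [eq_of_dgr (fun n => n) Function.injective_id (n := i) hx,
    eq_of_dgr (fun n => n) Function.injective_id (n := j) hy, of_mul]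
  exact of_mem_dgr (fun n => n) (i + j) _

instance : SetLike.GradedMonoid (dgr F X.BF (fun n : ℕ => n)) where
  one_mem := of_mem_dgr (fun n => n) 0 _
  mul_mem _ _ _ _ hx hy := X.gradedAlg_mul hx hy

/-- the algebra structure -/
instance : GradedAlgebra (dgr F X.BF (fun n : ℕ => n)) :=
  { (DirectSum.isInternal_submodule_of_iSupIndep_of_iSup_eq_top (dgr_indep _)
      (dgr_sup _)).chooseDecomposition with }

/-- the Yoneda algebra as a graded algebra -/
@[reducible] def B : GradedAlg F where
  A := X.EB
  grading := dgr F X.BF (fun n : ℕ => n)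

variable (C D : PCx 𝒜)

instance : IsScalarTower F X.EB (X.EM C) := ⟨fun t x y => X.smul_smul1 t x y⟩
instance : SMulCommClass X.EB F (X.EM C) := ⟨fun x t y => X.smul_smul2 t x y⟩

/-- the Yoneda module as a graded module -/
@[reducible] def E : X.B.GMod where
  M := X.EM C
  grading := dgr F (X.EF C) (fun n : ℕ => (n : ℤ))
  sup_eq_top := dgr_sup _
  indep := dgr_indep _
  smul_mem := by
    intro i j a m ha hm
    rw [eq_of_dgr (fun n => n) Function.injective_id (n := i) ha]
    by_cases hj : ∃ n : ℕ, (n : ℤ) = j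
    · obtain ⟨n, rfl⟩ := hj
      rw [eq_of_dgr (fun n : ℕ => (n : ℤ)) Nat.cast_injective (n := n) hm, of_smul]
      have := of_mem_dgr (F := F) (A := X.EF C) (fun n : ℕ => (n : ℤ)) (i + n)
        (X.bact (a i) (m n))
      simpa using this
    · have : m = 0 := DFinsupp.ext fun n => hm n (fun h => hj ⟨n, h⟩)
      rw [this, smul_zero]
      exact zero_mem _

theorem E_neg (j : ℤ) (hj : j < 0) : (X.E C).grading j = ⊥ := by
  rw [eq_bot_iff]
  intro x hx
  refine (Submodule.mem_bot F).2 (DFinsupp.ext fun n => hx n ?_)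
  change (n : ℤ) ≠ j
  omega

variable {C D}

theorem pidx {c s t : ℕ} (hs : s = c * t) (n : ℕ) : c * (n + t) = c * n + s := by
  subst hs
  ring

/-- pullback on pieces -/
def pullc {s : ℕ} (a : SMap C D s) {t : ℕ} (hs : s = X.c * t) (n : ℕ) :
    X.EF D n →+ X.EF C (n + t) where
  toFun g := (show X.H D (X.c * n) from g) ∘ₗ a.f (X.c * (n + t)) (X.c * n) (pidx hs n)
  map_zero' := LinearMap.zero_comp _
  map_add' _ _ := LinearMap.add_comp _ _ _

/-- pullback -/
def pullA {s : ℕ} (a : SMap C D s) {t : ℕ} (hs : s = X.c * t) : X.EM D →+ X.EM C :=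
  DirectSum.toAddMonoid fun n => (DirectSum.of (X.EF C) (n + t)).comp (X.pullc a hs n)

theorem pullA_of {s : ℕ} (a : SMap C D s) {t : ℕ} (hs : s = X.c * t) (n : ℕ) (g : X.EF D n) :
    X.pullA a hs (DirectSum.of (X.EF D) n g) = DirectSum.of (X.EF C) (n + t) (X.pullc a hs n g) :=
  DirectSum.toAddMonoid_of _ _ _

theorem of_act_eq {n n' i j : ℕ} (hn : n = n') (h : X.c * n = i + j) (h' : X.c * n' = i + j)
    (f : X.H X.R i) (g : X.H C j) :
    DirectSum.of (X.EF C) n (X.act h f g) = DirectSum.of (X.EF C) n' (X.act h' f g) := by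
  subst hn
  rfl

/-- pullback, linear over the Yoneda algebra -/
def pull {s : ℕ} (a : SMap C D s) {t : ℕ} (hs : s = X.c * t) : X.EM D →ₗ[X.EB] X.EM C where
  toFun := X.pullA a hs
  map_add' := (X.pullA a hs).map_add
  map_smul' b x := by
    rw [RingHom.id_apply]
    induction b using DirectSum.induction_on with
    | zero => simp
    | add x x' hx hx' => rw [add_smul, map_add, hx, hx', add_smul]
    | of i f =>
      induction x using DirectSum.induction_on with
      | zero => simp
      | add y y' hy hy' => rw [smul_add, map_add, map_add, smul_add, hy, hy']
      | of n g =>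
        rw [of_smul, pullA_of, pullA_of, of_smul]
        have h' : X.c * (i + n + t) = X.c * i + X.c * (n + t) := by ring
        refine Eq.trans (congrArg (DirectSum.of (X.EF C) (i + n + t))
          (X.act_comp (C := C) (D := D) (idx X.c i n) f g a (pidx hs n) (pidx hs (i + n)) h')) ?_
        exact X.of_act_eq (Nat.add_assoc i n t) h' (idx X.c i (n + t)) f _

variable {s : ℕ} (a : SMap C D s) {t : ℕ} (hs : s = X.c * t)

theorem pull_of (n : ℕ) (g : X.EF D n) :
    X.pull a hs (DirectSum.of (X.EF D) n g) = DirectSum.of (X.EF C) (n + t) (X.pullc a hs n g) :=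
  X.pullA_of a hs n g

theorem pull_apply (x : X.EM D) (n : ℕ) : (X.pull a hs x) (n + t) = X.pullc a hs n (x n) := by
  induction x using DirectSum.induction_on with
  | zero => simp
  | add y y' hy hy' =>
    rw [map_add, DirectSum.add_apply, hy, hy', DirectSum.add_apply, map_add]
  | of m g =>
    rw [pull_of]
    by_cases h : m = n
    · subst h
      rw [DirectSum.of_eq_same, DirectSum.of_eq_same]
    · rw [DirectSum.of_eq_of_ne _ _ _ (fun h' => h (by omega)),
        DirectSum.of_eq_of_ne _ _ _ (fun h' => h (by omega)), map_zero]

theorem pull_grad (j : ℤ) (x : X.EM D) (hx : x ∈ (X.E D).grading j) :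
    X.pull a hs x ∈ (X.E C).grading (j + t) := by
  by_cases hj : ∃ n : ℕ, (n : ℤ) = j
  · obtain ⟨n, rfl⟩ := hj
    rw [eq_of_dgr (fun n : ℕ => (n : ℤ)) Nat.cast_injective (n := n) hx, pull_of]
    have := of_mem_dgr (F := F) (A := X.EF C) (fun n : ℕ => (n : ℤ)) (n + t)
      (X.pullc a hs n (x n))
    simpa using this
  · have : x = 0 := DFinsupp.ext fun n => hx n (fun h => hj ⟨n, h⟩)
    rw [this, map_zero]
    exact zero_mem _

end Ctx

end GradedAlg

namespace GradedAlg

/-! ### Part 7: projectivity and exactness of the Yoneda modules -/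

variable {F : Type} [Field F] {𝒜 : GradedAlg F}

namespace Ctx
variable (X : Ctx 𝒜)

/-- the generator -/
def one0 : X.EM X.R := DirectSum.of (X.EF X.R) 0 (X.RT.aug.lin : X.H X.R 0)

/-- the free module -/
def θ : X.EB →ₗ[X.EB] X.EM X.R := LinearMap.toSpanSingleton X.EB (X.EM X.R) X.one0

theorem θ_of (n : ℕ) (f : X.BF n) :
    X.θ (DirectSum.of X.BF n f) = DirectSum.of (X.EF X.R) n f := by
  change DirectSum.of X.BF n f • X.one0 = _
  refine (X.of_smul (C := X.R) f _).trans ?_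
  exact congrArg (DirectSum.of (X.EF X.R) n) (X.act_one_right rfl f)

theorem θ_apply (x : X.EB) (n : ℕ) : X.θ x n = x n := by
  induction x using DirectSum.induction_on with
  | zero => simp; rfl
  | add y y' hy hy' => rw [map_add, DirectSum.add_apply, hy, hy', DirectSum.add_apply]; rfl
  | of m g =>
    rw [θ_of]
    by_cases h : n = m
    · subst h
      rw [DirectSum.of_eq_same]
      exact DirectSum.of_eq_same (β := X.EF X.R) _ _
    · rw [DirectSum.of_eq_of_ne _ _ _ h]
      exact DirectSum.of_eq_of_ne (β := X.EF X.R) _ _ _ h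

theorem θ_surj : Function.Surjective X.θ := by
  intro y
  refine ds_mem (LinearMap.range X.θ).toAddSubmonoid y fun n => ⟨DirectSum.of X.BF n (y n), ?_⟩
  exact X.θ_of n (y n)

theorem θ_inj : Function.Injective X.θ := by
  intro x y h
  refine DFinsupp.ext fun n => ?_
  have := congrArg (fun z : X.EM X.R => z n) h
  simp only [θ_apply] at this
  exact this

theorem R_finite : Module.Finite X.EB (X.EM X.R) := Module.Finite.of_surjective X.θ X.θ_surj

theorem R_proj : Module.Projective X.EB (X.EM X.R) :=
  Module.Projective.of_equiv (LinearEquiv.ofBijective X.θ ⟨X.θ_inj, X.θ_surj⟩)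

theorem R_gen : (X.E X.R).GenInDeg 0 := by
  unfold GMod.GenInDeg
  rw [eq_top_iff]
  rintro y -
  obtain ⟨x, rfl⟩ := X.θ_surj y
  refine Submodule.smul_mem _ x (Submodule.subset_span ?_)
  exact of_mem_dgr (F := F) (fun n : ℕ => (n : ℤ)) 0 _

section retract
variable {Q : PCx 𝒜} {r : ℕ} (π : Fin r → SMap X.R Q 0) (ι : Fin r → SMap Q X.R 0)
  (sum_eq : ∀ n (g : (Q.P n).M →ₗ[𝒜.A] X.T.M),
    ∑ i, g ∘ₗ (π i).f n n rfl ∘ₗ (ι i).f n n rfl = g)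

theorem zs (c : ℕ) : 0 = c * 0 := rfl

/-- inclusion into a free module -/
def incl : X.EM Q →ₗ[X.EB] (Fin r → X.EM X.R) := LinearMap.pi fun i => X.pull (π i) (zs _)

/-- projection from a free module -/
def proj : (Fin r → X.EM X.R) →ₗ[X.EB] X.EM Q :=
  ∑ i, X.pull (ι i) (zs _) ∘ₗ LinearMap.proj i

theorem proj_incl
    (sum_eq : ∀ n (g : (Q.P n).M →ₗ[𝒜.A] X.T.M),
      ∑ i, g ∘ₗ (π i).f n n rfl ∘ₗ (ι i).f n n rfl = g) (x : X.EM Q) : X.proj ι (X.incl π x) = x := by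
  have h : X.proj ι (X.incl π x) = ∑ i, X.pull (ι i) (zs _) (X.pull (π i) (zs _) x) := by
    simp [proj, incl]
  rw [h]
  refine DFinsupp.ext fun n => ?_
  have h2 : ∀ i, (X.pull (ι i) (zs _) (X.pull (π i) (zs _) x)) n =
      X.pullc (ι i) (zs _) n (X.pullc (π i) (zs _) n (x n)) := by
    intro i
    refine (X.pull_apply (ι i) (zs _) _ n).trans ?_
    exact congrArg _ (X.pull_apply (π i) (zs _) x n)
  have h3 : (∑ i, X.pull (ι i) (zs _) (X.pull (π i) (zs _) x)) n =
      ∑ i, (X.pull (ι i) (zs _) (X.pull (π i) (zs _) x)) n :=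
    map_sum (DirectSum.component F ℕ (X.EF Q) n).toAddMonoidHom _ _
  refine h3.trans ?_
  simp only [h2]
  exact sum_eq (X.c * n) (x n)

theorem Q_proj
    (sum_eq : ∀ n (g : (Q.P n).M →ₗ[𝒜.A] X.T.M),
      ∑ i, g ∘ₗ (π i).f n n rfl ∘ₗ (ι i).f n n rfl = g) : Module.Projective X.EB (X.EM Q) := by
  have := X.R_proj
  have : Module.Projective X.EB (Fin r → X.EM X.R) := by
    classical
    exact Module.Projective.of_equiv (DFinsupp.linearEquivFunOnFintype (R := X.EB)
      (M := fun _ : Fin r => X.EM X.R))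
  exact Module.Projective.of_split (X.incl π) (X.proj ι)
    (LinearMap.ext (X.proj_incl π ι sum_eq))

theorem Q_finite
    (sum_eq : ∀ n (g : (Q.P n).M →ₗ[𝒜.A] X.T.M),
      ∑ i, g ∘ₗ (π i).f n n rfl ∘ₗ (ι i).f n n rfl = g) : Module.Finite X.EB (X.EM Q) := by
  have := X.R_finite
  exact Module.Finite.of_surjective (X.proj ι) fun x => ⟨_, X.proj_incl π ι sum_eq x⟩

theorem Q_gen
    (sum_eq : ∀ n (g : (Q.P n).M →ₗ[𝒜.A] X.T.M),
      ∑ i, g ∘ₗ (π i).f n n rfl ∘ₗ (ι i).f n n rfl = g) : (X.E Q).GenInDeg 0 := by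
  refine (X.R_gen.pi r).of_surj (Y := X.E Q) ⟨X.proj ι, ?_⟩
    fun x => ⟨_, X.proj_incl π ι sum_eq x⟩
  intro j x hx
  have h : X.proj ι x = ∑ i, X.pull (ι i) (zs _) (x i) := by
    simp [proj]
  rw [h]
  refine sum_mem fun i _ => ?_
  have := X.pull_grad (ι i) (zs _) j (x i) (Submodule.mem_pi.1 hx i trivial)
  simpa using this

end retract

variable {C D : PCx 𝒜}

theorem pull_surj (a : SMap C D 0)
    (h : ∀ n (f : X.H C n), ∃ g : X.H D n, g ∘ₗ a.f n n rfl = f) :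
    Function.Surjective (X.pull a (zs _)) := by
  intro y
  refine ds_mem (LinearMap.range (X.pull a (zs _))).toAddSubmonoid y fun n => ?_
  obtain ⟨g, hg⟩ := h (X.c * n) (y n)
  refine ⟨DirectSum.of (X.EF D) n g, ?_⟩
  exact (X.pull_of a (zs _) n g).trans (congrArg _ hg)

theorem pull_inj {s t : ℕ} (a : SMap C D s) (hs : s = X.c * t)
    (h : ∀ m n h (g : X.H D n), g ∘ₗ a.f m n h = 0 → g = 0) :
    Function.Injective (X.pull a hs) := by
  rw [injective_iff_map_eq_zero]
  intro x hx
  refine DFinsupp.ext fun n => ?_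
  have h1 := X.pull_apply a hs x n
  rw [hx] at h1
  exact h _ _ _ (x n) h1.symm

theorem pull_exact {L S Q : PCx 𝒜} (α : SMap L Q 0) (β : SMap Q S X.c)
    (h0 : ∀ g : X.H Q 0, g ∘ₗ α.f 0 0 rfl = 0 → g = 0)
    (h1 : ∀ m n h, β.f m n h ∘ₗ α.f m m rfl = 0)
    (h2 : ∀ m n h (g : X.H Q m), g ∘ₗ α.f m m rfl = 0 → ∃ g' : X.H S n, g' ∘ₗ β.f m n h = g) :
    LinearMap.range (X.pull β (Nat.mul_one _).symm) = LinearMap.ker (X.pull α (zs _)) := by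
  apply le_antisymm
  · rintro _ ⟨y, rfl⟩
    rw [LinearMap.mem_ker]
    induction y using DirectSum.induction_on with
    | zero => simp
    | add y y' hy hy' => rw [map_add, map_add, hy, hy', add_zero]
    | of n g =>
      rw [pull_of, pull_of]
      have : X.pullc α (zs _) (n + 1) (X.pullc β (Nat.mul_one _).symm n g) = 0 := by
        have key : ∀ g' : X.H S (X.c * n),
            (g' ∘ₗ β.f (X.c * (n + 1)) (X.c * n) (Nat.mul_succ _ _)) ∘ₗ
              α.f (X.c * (n + 1)) (X.c * (n + 1)) rfl = 0 := by
          intro g'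
          rw [LinearMap.comp_assoc, h1, LinearMap.comp_zero]
        exact key g
      rw [this, map_zero]
  · intro x hx
    rw [LinearMap.mem_ker] at hx
    have hx' : ∀ n, X.pullc α (zs _) n (x n) = 0 := by
      intro n
      have := X.pull_apply α (zs _) x n
      rw [hx] at this
      exact this.symm
    refine ds_mem (LinearMap.range (X.pull β (Nat.mul_one _).symm)).toAddSubmonoid x fun n => ?_
    cases n with
    | zero =>
      have : x 0 = 0 := h0 (x 0) (hx' 0)
      rw [this, map_zero]
      exact zero_mem _
    | succ n =>
      obtain ⟨g, hg⟩ := h2 (X.c * (n + 1)) (X.c * n) (Nat.mul_succ _ _) (x (n + 1)) (hx' (n + 1))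
      refine ⟨DirectSum.of (X.EF S) n g, ?_⟩
      exact (X.pull_of β (Nat.mul_one _).symm n g).trans (congrArg _ hg)

end Ctx

end GradedAlg

namespace GradedAlg

/-! ### Part 8: the linear resolution of the Yoneda module -/

variable {F : Type} [Field F] {𝒜 : GradedAlg F}

namespace Ctx
variable (X : Ctx 𝒜) {δ : ℕ → ℤ} (st : ∀ C : LCx 𝒜 δ, StepData X.T X.R X.c C) (L0 : LCx 𝒜 δ)

/-- the iterated complexes -/
def L : ℕ → LCx 𝒜 δ
  | 0 => L0
  | i + 1 => (st (L i)).S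

/-- the terms -/
abbrev Qi (i : ℕ) : LCx 𝒜 δ := (st (X.L st L0 i)).Q

/-- the surjections -/
def Ai (i : ℕ) : X.EM (X.Qi st L0 i).cx →ₗ[X.EB] X.EM (X.L st L0 i).cx :=
  X.pull (st (X.L st L0 i)).α.toS (zs _)

/-- the injections -/
def Bi (i : ℕ) : X.EM (X.L st L0 (i + 1)).cx →ₗ[X.EB] X.EM (X.Qi st L0 i).cx :=
  X.pull (st (X.L st L0 i)).β (Nat.mul_one _).symm

theorem Ai_surj (i : ℕ) : Function.Surjective (X.Ai st L0 i) :=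
  X.pull_surj _ fun n f => (st (X.L st L0 i)).a_surj n f

theorem Bi_inj (i : ℕ) : Function.Injective (X.Bi st L0 i) :=
  X.pull_inj _ _ fun m n h g => (st (X.L st L0 i)).b_inj m n h g

theorem Bi_Ai (i : ℕ) : LinearMap.range (X.Bi st L0 i) = LinearMap.ker (X.Ai st L0 i) :=
  X.pull_exact _ _ (st (X.L st L0 i)).a_inj (st (X.L st L0 i)).b_a (st (X.L st L0 i)).b_exact

theorem Ai_grad (i : ℕ) (j : ℤ) (x : X.EM (X.Qi st L0 i).cx)
    (hx : x ∈ (X.E (X.Qi st L0 i).cx).grading j) :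
    X.Ai st L0 i x ∈ (X.E (X.L st L0 i).cx).grading j := by
  have := X.pull_grad (st (X.L st L0 i)).α.toS (zs _) j x hx
  rwa [Nat.cast_zero, add_zero] at this

theorem Bi_grad (i : ℕ) (j : ℤ) (x : X.EM (X.L st L0 (i + 1)).cx)
    (hx : x ∈ (X.E (X.L st L0 (i + 1)).cx).grading j) :
    X.Bi st L0 i x ∈ (X.E (X.Qi st L0 i).cx).grading (j + 1) :=
  X.pull_grad (st (X.L st L0 i)).β (Nat.mul_one _).symm j x hx

/-- terms of the resolution -/
abbrev Pi (i : ℕ) : X.B.GMod := (X.E (X.Qi st L0 i).cx).shift (-(i : ℤ))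

/-- the differential -/
def di (i : ℕ) : GHom (X.Pi st L0 (i + 1)) (X.Pi st L0 i) where
  lin := X.Bi st L0 i ∘ₗ X.Ai st L0 (i + 1)
  grad j x hx := by
    have h1 := X.Bi_grad st L0 i _ _ (X.Ai_grad st L0 (i + 1) _ x hx)
    have h2 : j + -(((i + 1 : ℕ)) : ℤ) + 1 = j + -(i : ℤ) := by
      push_cast
      ring
    rw [h2] at h1
    exact h1

theorem Pi_gen (i : ℕ) : (X.Pi st L0 i).GenInDeg (i : ℤ) :=
  (X.Q_gen (st (X.L st L0 i)).π (st (X.L st L0 i)).ι (st (X.L st L0 i)).sum_eq).shift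
    (add_neg_cancel _)

variable {CM : PCx 𝒜} (u : SMap CM L0.cx 0)

/-- the augmentation -/
def augi : GHom (X.Pi st L0 0) (X.E CM) where
  lin := X.pull u (zs _) ∘ₗ X.Ai st L0 0
  grad j x hx := by
    have h1 := X.pull_grad u (zs _) _ _ (X.Ai_grad st L0 0 _ x hx)
    have h2 : j + -((0 : ℕ) : ℤ) + ((0 : ℕ) : ℤ) = j := by simp
    rw [h2] at h1
    exact h1

/-- the resolution -/
theorem koszul (st : ∀ C : LCx 𝒜 δ, StepData X.T X.R X.c C) (L0 : LCx 𝒜 δ)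
    (u : SMap CM L0.cx 0)
    (hu1 : ∀ n (f : X.H CM n), ∃ g : X.H L0.cx n, g ∘ₗ u.f n n rfl = f)
    (hu2 : ∀ m n h (g : X.H L0.cx n), g ∘ₗ u.f m n h = 0 → g = 0) : X.B.IsKoszulMod (X.E CM) := by
  refine ⟨{ P := X.Pi st L0, d := X.di st L0, aug := X.augi st L0 u
            fg := fun i => ?_
            projective := fun i => ?_
            aug_surj := ?_
            exact_aug := ?_
            exact := fun i => ?_
            minimal := fun i => ?_ }, X.Pi_gen st L0⟩
  · exact X.Q_finite (st (X.L st L0 i)).π (st (X.L st L0 i)).ι (st (X.L st L0 i)).sum_eq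
  · exact X.Q_proj (st (X.L st L0 i)).π (st (X.L st L0 i)).ι (st (X.L st L0 i)).sum_eq
  · exact (X.pull_surj u hu1).comp (X.Ai_surj st L0 0)
  · change LinearMap.range (X.Bi st L0 0 ∘ₗ X.Ai st L0 1) =
      LinearMap.ker (X.pull u (zs _) ∘ₗ X.Ai st L0 0)
    rw [LinearMap.range_comp_of_range_eq_top _ (LinearMap.range_eq_top.2 (X.Ai_surj st L0 1))]
    exact (X.Bi_Ai st L0 0).trans (LinearMap.ker_comp_of_ker_eq_bot (X.Ai st L0 0)
      (LinearMap.ker_eq_bot.2 (X.pull_inj u (zs _) hu2))).symm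
  · change LinearMap.range (X.Bi st L0 (i + 1) ∘ₗ X.Ai st L0 (i + 2)) =
      LinearMap.ker (X.Bi st L0 i ∘ₗ X.Ai st L0 (i + 1))
    rw [LinearMap.range_comp_of_range_eq_top _ (LinearMap.range_eq_top.2 (X.Ai_surj st L0 (i + 2))),
      LinearMap.ker_comp_of_ker_eq_bot _ (LinearMap.ker_eq_bot.2 (X.Bi_inj st L0 i)), Bi_Ai]
  · exact GHom.range_le_JX (X.Pi_gen st L0 (i + 1)) (X.Pi_gen st L0 i) (by push_cast; omega) _

end Ctx

/-! ### Part 9: comparison with `ExtQ` -/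

section ext
variable {T M : 𝒜.GMod} (hT : ∀ a ∈ 𝒜.jideal, ∀ v : T.M, a • v = 0) (R : MinRes M)

theorem mem_cocyc (hT : ∀ a ∈ 𝒜.jideal, ∀ v : T.M, a • v = 0) (R : MinRes M)
    {n : ℕ} (f : HomSp T R n) : f ∈ cocyc T R n := R.cx.hom_d hT f

theorem extRel_bot (hT : ∀ a ∈ 𝒜.jideal, ∀ v : T.M, a • v = 0) (R : MinRes M)
    (n : ℕ) : extRel T R n = ⊥ := by
  rw [eq_bot_iff]
  rintro ⟨f, hf⟩ h
  have h' : f ∈ cobound T R n := h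
  have : f = 0 := by
    cases n with
    | zero => exact h'
    | succ n =>
      obtain ⟨g, hg⟩ := h'
      rw [← hg]
      exact R.cx.hom_d hT g
  subst this
  exact Submodule.zero_mem _

/-- `Ext` is the space of cochains -/
def extEquiv (n : ℕ) : HomSp T R n ≃ₗ[F] ExtQ T R n where
  toFun f := extCls T (mem_cocyc hT R f)
  map_add' _ _ := rfl
  map_smul' _ _ := rfl
  invFun := (extRel T R n).liftQ (cocyc T R n).subtype (by rw [extRel_bot hT R n]; exact bot_le)
  left_inv f := rfl
  right_inv x := by
    obtain ⟨x, rfl⟩ := Submodule.Quotient.mk_surjective _ x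
    rfl

end ext

namespace Ctx
variable (X : Ctx 𝒜) {M : 𝒜.GMod} (RM : MinRes M)

/-- the chain lift underlying a shift map -/
def chainLift {j : ℕ} (g : HomSp X.T RM j) : ChainLift X.T X.RT RM j g where
  ℓ := (X.lift (C := RM.cx) g).f
  comm_aug := X.lift_spec (C := RM.cx) g _
  comm k := (X.lift (C := RM.cx) g).comm (k + j) k rfl _

theorem yoneda_act
    (μ : ∀ i j : ℕ, ExtQ X.T X.RT i →ₗ[F] ExtQ X.T RM j →ₗ[F] ExtQ X.T RM (i + j))
    (hμ : IsYonedaMul X.T X.RT RM μ) {i j k : ℕ} (h : k = i + j) (h' : i + j = k)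
    (f : HomSp X.T X.RT i) (g : HomSp X.T RM j) :
    extEquiv X.hk RM k (X.act (C := RM.cx) h f g) =
      extCast X.T RM h' (μ i j (extEquiv X.hk X.RT i f) (extEquiv X.hk RM j g)) := by
  subst h
  exact (hμ i j f (mem_cocyc X.hk X.RT f) g (mem_cocyc X.hk RM g) (X.chainLift RM g)
    (mem_cocyc X.hk RM _)).symm

/-- pieces of the algebra -/
def phi (n : ℕ) : ↥(X.B.grading n) ≃ₗ[F] ExtQ X.T X.RT (X.c * n) :=
  LinearEquiv.trans (dgrEquiv (F := F) (A := X.BF) (fun n : ℕ => n) Function.injective_id n)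
    (show X.BF n ≃ₗ[F] ExtQ X.T X.RT (X.c * n) from extEquiv X.hk X.RT (X.c * n))

/-- pieces of the module -/
def psi (n : ℕ) : ↥((X.E RM.cx).grading (n : ℤ)) ≃ₗ[F] ExtQ X.T RM (X.c * n) :=
  LinearEquiv.trans (dgrEquiv (F := F) (A := X.EF RM.cx) (fun n : ℕ => (n : ℤ))
      Nat.cast_injective n)
    (show X.EF RM.cx n ≃ₗ[F] ExtQ X.T RM (X.c * n) from extEquiv X.hk RM (X.c * n))

theorem phi_mul
    (μ : ∀ i j : ℕ, ExtQ X.T X.RT i →ₗ[F] ExtQ X.T X.RT j →ₗ[F] ExtQ X.T X.RT (i + j))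
    (hμ : IsYonedaMul X.T X.RT X.RT μ) (m n : ℕ) (h : X.c * m + X.c * n = X.c * (m + n))
    (x : ↥(X.B.grading m)) (y : ↥(X.B.grading n))
    (hxy : (x : X.B.A) * (y : X.B.A) ∈ X.B.grading (m + n)) :
    X.phi (m + n) ⟨(x : X.B.A) * (y : X.B.A), hxy⟩ =
      extCast X.T X.RT h (μ (X.c * m) (X.c * n) (X.phi m x) (X.phi n y)) := by
  have h1 : ((x : X.EB) * (y : X.EB)) (m + n) = X.bmul ((x : X.EB) m) ((y : X.EB) n) := by
    conv_lhs => rw [eq_of_dgr (fun n => n) Function.injective_id (n := m) x.2,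
      eq_of_dgr (fun n => n) Function.injective_id (n := n) y.2, of_mul]
    exact DirectSum.of_eq_same _ _
  refine Eq.trans (congrArg (extEquiv X.hk X.RT (X.c * (m + n))) h1) ?_
  exact X.yoneda_act X.RT μ hμ _ h _ _

theorem psi_smul
    (μ : ∀ i j : ℕ, ExtQ X.T X.RT i →ₗ[F] ExtQ X.T RM j →ₗ[F] ExtQ X.T RM (i + j))
    (hμ : IsYonedaMul X.T X.RT RM μ) (m n : ℕ) (h : X.c * m + X.c * n = X.c * (m + n))
    (x : ↥(X.B.grading m)) (y : ↥((X.E RM.cx).grading (n : ℤ)))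
    (hxy : (x : X.B.A) • (y : (X.E RM.cx).M) ∈ (X.E RM.cx).grading ((m + n : ℕ) : ℤ)) :
    X.psi RM (m + n) ⟨(x : X.B.A) • (y : (X.E RM.cx).M), hxy⟩ =
      extCast X.T RM h (μ (X.c * m) (X.c * n) (X.phi m x) (X.psi RM n y)) := by
  have h1 : ((x : X.EB) • (y : X.EM RM.cx)) (m + n) =
      X.bact ((x : X.EB) m) ((y : X.EM RM.cx) n) := by
    conv_lhs => rw [eq_of_dgr (fun n => n) Function.injective_id (n := m) x.2,
      eq_of_dgr (fun n : ℕ => (n : ℤ)) Nat.cast_injective (n := n) y.2, of_smul]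
    exact DirectSum.of_eq_same _ _
  refine Eq.trans (congrArg (extEquiv X.hk RM (X.c * (m + n))) h1) ?_
  exact X.yoneda_act RM μ hμ _ h _ _

end Ctx

/-! ### Part 10: assembling -/

/-- a resolution with generation degrees as a linear complex -/
@[reducible] def MinRes.toL {δ : ℕ → ℤ} {M : 𝒜.GMod} (R : MinRes M)
    (hR : ∀ n, (R.P n).GenInDeg (δ n)) (hδ : ∀ n, δ n < δ (n + 1)) : LCx 𝒜 δ where
  P := R.P
  d := R.d
  fg := R.fg
  projective := R.projective
  exact := R.exact
  gen := hR
  lt := hδ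

theorem jump_lt {d : ℕ} (hd : 3 ≤ d) (n : ℕ) : jump d 3 n < jump d 3 (n + 1) := by
  have key : ∀ q r : ℕ, r < 3 → jump d 3 (3 * q + r) = q * d + r := by
    intro q r hr
    have h1 : (3 * q + r) % 3 = r := by omega
    have h2 : (3 * q + r - r) / 3 = q := by omega
    rw [jump, h1, h2]
  obtain ⟨q, r, hr, rfl⟩ : ∃ q r, r < 3 ∧ n = 3 * q + r := ⟨n / 3, n % 3, by omega, by omega⟩
  rw [key q r hr]
  by_cases h : r = 2
  · subst h
    rw [show 3 * q + 2 + 1 = 3 * (q + 1) + 0 by ring, key (q + 1) 0 (by omega)]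
    linarith
  · rw [show 3 * q + r + 1 = 3 * q + (r + 1) by ring, key q (r + 1) (by omega)]
    omega

theorem jump_add (d k n : ℕ) : jump d 3 (3 * k + n) = jump d 3 n + k * d := by
  have h1 : (3 * k + n) % 3 = n % 3 := by omega
  have h2 : (3 * k + n - n % 3) / 3 = k + (n - n % 3) / 3 := by omega
  rw [jump, jump, h1, h2]
  ring

/-- two minimal resolutions have the same cochains -/
theorem exists_compare {T M : 𝒜.GMod} (hT : ∀ a ∈ 𝒜.jideal, ∀ v : T.M, a • v = 0)
    (R R' : MinRes M) : ∃ u : SMap R.cx R'.cx 0,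
      (∀ n (f : HomSp T R n), ∃ g : HomSp T R' n, g ∘ₗ u.f n n rfl = f) ∧
      (∀ m n h (g : HomSp T R' n), g ∘ₗ u.f m n h = 0 → g = 0) := by
  have ex : ∀ R R' : MinRes M, ∃ L : SMap R.cx R'.cx 0,
      R'.aug.lin ∘ₗ L.f 0 0 rfl = R.aug.lin := by
    intro R R'
    refine SMap.exists_lift (C := R.cx) (D := R'.cx) R'.aug.lin R'.exact_aug R'.aug_surj 0
      R.aug.lin ?_
    ext x
    have : (R.d 0).lin x ∈ LinearMap.ker R.aug.lin := R.exact_aug ▸ LinearMap.mem_range_self _ x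
    exact this
  have un : ∀ (R R' : MinRes M) (u : SMap R.cx R'.cx 0) (v : SMap R'.cx R.cx 0),
      R'.aug.lin ∘ₗ u.f 0 0 rfl = R.aug.lin → R.aug.lin ∘ₗ v.f 0 0 rfl = R'.aug.lin →
      ∀ n (f : HomSp T R n), (f ∘ₗ v.f n n rfl) ∘ₗ u.f n n rfl = f := by
    intro R R' u v hu hv n f
    have := SMap.lift_unique (C := R.cx) (D := R.cx) hT R.aug.lin R.exact_aug
      (SMap.comp v u) (SMap.idS R.cx) (by
        change R.aug.lin ∘ₗ (v.f 0 0 rfl ∘ₗ u.f 0 0 rfl) = R.aug.lin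
        rw [← LinearMap.comp_assoc, hv, hu]) n n rfl f
    exact this
  obtain ⟨u, hu⟩ := ex R R'
  obtain ⟨v, hv⟩ := ex R' R
  refine ⟨u, fun n f => ⟨f ∘ₗ v.f n n rfl, un R R' u v hu hv n f⟩, ?_⟩
  intro m n h g hg
  obtain rfl : m = n := by omega
  have h1 := un R' R v u hv hu m g
  rw [← h1]
  change (g ∘ₗ u.f m m h) ∘ₗ v.f m m rfl = 0
  rw [hg, LinearMap.zero_comp]

end GradedAlg


open GradedAlg in
/-- **Theorem 2.8(1).** Let `A` be piecewise-Koszul with period `p = 3` and jump degree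
`d`, and let `M` be a piecewise-Koszul module generated in degree `0`.  Then for every
`k ≥ 1`, `E_k(M) = ⊕_{n≥0} Ext^{3kn}_A(M,A_0)` is a Koszul module over
`E_k(A) = ⊕_{n≥0} Ext^{3kn}_A(A_0,A_0)`: there are a graded algebra `B` and a graded
`B`-module `N` whose components correspond to the groups `Ext^{3kn}` and whose
multiplication/action corresponds to the Yoneda product/action, such that `N` admits a
minimal graded projective resolution over `B` with `n`-th term generated in degree `n`. -/
theorem ext_submodule_isKoszul
    {F : Type} [Field F] (𝒜 : GradedAlg F) (hA : 𝒜.Standing)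
    (d : ℕ) (hd : 3 ≤ d)
    (T : 𝒜.GMod) (hT : IsTrivialGMod T) (hpk : 𝒜.IsPKAlg 3 d T)
    (M : 𝒜.GMod) (hfg : Module.Finite 𝒜.A M.M)
    (hM0 : M.GenInDeg (0 : ℤ)) (hMpk : 𝒜.IsPKMod 3 d 0 M)
    (RT : MinRes T) (RM : MinRes M)
    (μA : ∀ i j : ℕ, ExtQ T RT i →ₗ[F] ExtQ T RT j →ₗ[F] ExtQ T RT (i + j))
    (hμA : IsYonedaMul T RT RT μA)
    (μM : ∀ i j : ℕ, ExtQ T RT i →ₗ[F] ExtQ T RM j →ₗ[F] ExtQ T RM (i + j))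
    (hμM : IsYonedaMul T RT RM μM)
    (k : ℕ) (hk : 1 ≤ k) :
    ∃ (B : GradedAlg F) (φ : ∀ n : ℕ, ↥(B.grading n) ≃ₗ[F] ExtQ T RT (3 * k * n))
      (N : B.GMod) (ψ : ∀ n : ℕ, ↥(N.grading (n : ℤ)) ≃ₗ[F] ExtQ T RM (3 * k * n)),
      (∀ (m n : ℕ) (x : ↥(B.grading m)) (y : ↥(B.grading n)),
        φ (m + n) ⟨(x : B.A) * (y : B.A), SetLike.mul_mem_graded x.2 y.2⟩ =
          extCast T RT (by ring) (μA (3 * k * m) (3 * k * n) (φ m x) (φ n y))) ∧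
      (∀ j : ℤ, j < 0 → N.grading j = ⊥) ∧
      (∀ (m n : ℕ) (x : ↥(B.grading m)) (y : ↥(N.grading (n : ℤ))),
        ψ (m + n) ⟨(x : B.A) • (y : N.M), by
            have h := N.smul_mem x.2 y.2
            rwa [show ((m : ℤ) + (n : ℤ)) = ((m + n : ℕ) : ℤ) by push_cast; ring] at h⟩ =
          extCast T RM (by ring) (μM (3 * k * m) (3 * k * n) (φ m x) (ψ n y))) ∧
      B.IsKoszulMod N := by
  obtain ⟨DT, hDT⟩ := hpk
  obtain ⟨DM, hDM⟩ := hMpk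
  have hlt : ∀ n, ((jump d 3 n : ℤ) + 0) < ((jump d 3 (n + 1) : ℕ) : ℤ) + 0 := fun n => by
    have := jump_lt hd n
    omega
  let X : Ctx 𝒜 := { T := T, hk := hT.kill, RT := RT, c := 3 * k }
  have st : ∀ C : LCx 𝒜 (fun n => (jump d 3 n : ℤ) + 0), StepData X.T X.R X.c C := fun C =>
    Classical.choice (exists_step hA.semisimple hT RT (DT.toL hDT hlt) DT.aug DT.exact_aug
      DT.aug_surj (by simp [jump]) (3 * k) ((k * d : ℕ) : ℤ) (by omega)
      (fun n => by
        have := jump_add d k n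
        rw [this]
        push_cast
        ring) C)
  obtain ⟨u, hu1, hu2⟩ := exists_compare hT.kill RM DM
  refine ⟨X.B, X.phi, X.E RM.cx, X.psi RM, ?_, X.E_neg RM.cx, ?_,
    X.koszul st (DM.toL hDM hlt) u hu1 hu2⟩
  · intro m n x y
    exact X.phi_mul μA hμA m n _ x y _
  · intro m n x y
    exact X.psi_smul RM μM hμM m n _ x y _
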